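/- arXiv:2410.16661 — 3 statements merged into one kernel-verified Lean document; each statement's English description precedes it below -/
import Mathlib

section
/- Let n ≥ 1, s ∈ (0,1), α ∈ (0,1), K > 0, let Ω ⊂ ℝⁿ be a bounded open set, and let u : ℝⁿ → ℝ be bounded and Lipschitz, twice continuously differentiable in Ω, with |D²u(x)| ≤ K·dist(x,∂Ω)^{α−1} for all x ∈ Ω. Then there exists a constant C, depending only on n, s, α, K, ‖u‖_{C^{0,1}(ℝⁿ)} and the diameter of Ω, such that for all x ∈ Ω: |(−Δ)ˢu(x)| ≤ C(1 + 𝟙_{s=1/2}|log dist(x,∂Ω)| + 𝟙_{s>1/2} dist(x,∂Ω)^{1−2s}). -/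
open MeasureTheory Real Set Metric Bornology Filter
open scoped RealInnerProductSpace ENNReal NNReal Pointwise

noncomputable section

abbrev En (n : ℕ) : Type := EuclideanSpace ℝ (Fin n)

/-- The normalizing constant `c_{n,s}`. -/
def cK (n : ℕ) (s : ℝ) : ℝ :=
  s * (2 : ℝ) ^ (2 * s) * Real.Gamma (((n : ℝ) + 2 * s) / 2) /
    (Real.pi ^ ((n : ℝ) / 2) * Real.Gamma (1 - s))

/-- The fractional Laplacian `(-Δ)ˢ u (x)`. -/
def fracLap (n : ℕ) (s : ℝ) (u : En n → ℝ) (x : En n) : ℝ :=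
  (cK n s / 2) * ∫ y : En n, (2 * u x - u (x + y) - u (x - y)) / ‖y‖ ^ ((n : ℝ) + 2 * s)

/-- `(-Δ)^{s/2} u (x)`, defined via the non-symmetrized integral. -/
def fracHalf (n : ℕ) (s : ℝ) (u : En n → ℝ) (x : En n) : ℝ :=
  cK n (s / 2) * ∫ z : En n, (u x - u (x + z)) / ‖z‖ ^ ((n : ℝ) + s)

/-- The squared Gagliardo-type seminorm `[u]_s²`. -/
def seminormSsq (n : ℕ) (s : ℝ) (u : En n → ℝ) : ℝ :=
  (cK n s / 2) * ∫ p : En n × En n, (u p.1 - u p.2) ^ 2 / ‖p.1 - p.2‖ ^ ((n : ℝ) + 2 * s)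

/-- The squared seminorm `[u]₁² = ∫_Ω |∇u|²`. -/
def seminorm1sq (n : ℕ) (Ω : Set (En n)) (u : En n → ℝ) : ℝ :=
  ∫ x in Ω, ‖gradient u x‖ ^ 2

/-- The Laplacian as the trace of the Hessian. -/
def lap (n : ℕ) (u : En n → ℝ) (x : En n) : ℝ :=
  ∑ i : Fin n, fderiv ℝ (fun y => fderiv ℝ u y (EuclideanSpace.single i 1)) x
    (EuclideanSpace.single i 1)

/-- The Hessian `D²u(x)` as a continuous bilinear-type map; `‖hess n u x‖` is its operator
norm. -/
def hess (n : ℕ) (u : En n → ℝ) (x : En n) : En n →L[ℝ] En n →L[ℝ] ℝ :=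
  fderiv ℝ (fderiv ℝ u) x

/-- A bounded C² domain `Ω ⊆ ℝⁿ`: a bounded open connected set whose boundary is a C²
hypersurface, described by a global C² defining function with nonvanishing gradient
on the boundary. -/
structure C2Domain (n : ℕ) where
  carrier : Set (En n)
  phi : En n → ℝ
  phi_smooth : ContDiff ℝ 2 phi
  carrier_eq : carrier = {x | phi x < 0}
  grad_ne : ∀ x ∈ frontier carrier, gradient phi x ≠ 0
  bounded : IsBounded carrier
  connected : IsConnected carrier

/-- The outward unit normal `ν` on `∂Ω`. -/
def C2Domain.nu {n : ℕ} (D : C2Domain n) (x : En n) : En n :=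
  ‖gradient D.phi x‖⁻¹ • gradient D.phi x

/-- The normal derivative `∂u/∂ν` at a boundary point (the derivative from inside). -/
def normalDeriv {n : ℕ} (D : C2Domain n) (u : En n → ℝ) (x : En n) : ℝ :=
  fderivWithin ℝ u (closure D.carrier) x (D.nu x)

/-- `Ω` is strictly star-shaped with respect to `z₀`. -/
def C2Domain.StrictlyStarShapedAt {n : ℕ} (D : C2Domain n) (z₀ : En n) : Prop :=
  z₀ ∈ D.carrier ∧ ∀ x ∈ frontier D.carrier, 0 < ⟪x - z₀, D.nu x⟫

/-- `Ω` is strictly star-shaped. -/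
def C2Domain.StrictlyStarShaped {n : ℕ} (D : C2Domain n) : Prop :=
  ∃ z₀, D.StrictlyStarShapedAt z₀

/-- The Pohozaev boundary term `∫_{∂Ω} (∂u/∂ν)² (x·ν(x)) dS`, with `dS` the
`(n-1)`-dimensional Hausdorff measure on `∂Ω`. -/
def pohozaevBoundary {n : ℕ} (D : C2Domain n) (u : En n → ℝ) : ℝ :=
  ∫ x in frontier D.carrier, (normalDeriv D u x) ^ 2 * ⟪x, D.nu x⟫ ∂ μH[(n : ℝ) - 1]

/-- Condition (★). -/
def StarCond (n : ℕ) (s : ℝ) (Ω : Set (En n)) (u : En n → ℝ) : Prop :=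
  ∃ C > 0, ∃ γ ∈ Set.Ioo (0:ℝ) 1, ∀ x ∈ Ω,
    ‖hess n u x‖ ≤ C * infDist x (frontier Ω) ^ (γ - 1) ∧
    |u x| ≤ C * infDist x (frontier Ω) ∧
    |fracLap n s u x| ≤ C * (1 + (if s < 1/2 then 1 else 0)
      + (if s = 1/2 then |Real.log (infDist x (frontier Ω))| else 0)
      + (if 1/2 < s then infDist x (frontier Ω) ^ (1 - 2*s) else 0))

/-- geometry of the domain -/
lemma aux_geom (n : ℕ) (hn : 1 ≤ n) (R : ℝ) (Ω : Set (En n)) (ho : IsOpen Ω) (hb : IsBounded Ω)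
    (hR : Metric.diam Ω ≤ R) (x : En n) (hx : x ∈ Ω) :
    0 < infDist x (frontier Ω) ∧ infDist x (frontier Ω) ≤ R ∧
      ball x (infDist x (frontier Ω)) ⊆ Ω := by
  have : Nonempty (Fin n) := ⟨⟨0, hn⟩⟩
  have hne : (frontier Ω).Nonempty := by
    rw [nonempty_frontier_iff]
    refine ⟨⟨x, hx⟩, ?_⟩
    rintro rfl
    exact NormedSpace.unbounded_univ ℝ (En n) hb
  have hpos : 0 < infDist x (frontier Ω) := by
    rw [← isClosed_frontier.notMem_iff_infDist_pos hne]
    intro h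
    rw [ho.frontier_eq] at h
    exact h.2 hx
  refine ⟨hpos, ?_, ?_⟩
  · obtain ⟨y, hy⟩ := hne
    calc infDist x (frontier Ω) ≤ dist x y := infDist_le_dist_of_mem hy
      _ ≤ Metric.diam (closure Ω) :=
        dist_le_diam_of_mem hb.closure (subset_closure hx) (frontier_subset_closure hy)
      _ = Metric.diam Ω := diam_closure Ω
      _ ≤ R := hR
  · refine IsPreconnected.subset_left_of_subset_union ho (isClosed_closure (s := Ω)).isOpen_compl
      ?_ ?_ ?_ (convex_ball x _).isPreconnected
    · exact disjoint_compl_right_iff_subset.2 subset_closure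
    · intro z hz
      by_cases h : z ∈ Ω
      · exact Or.inl h
      · refine Or.inr fun hc => ?_
        exact ball_infDist_subset_compl hz (by rw [ho.frontier_eq]; exact ⟨hc, h⟩)
    · exact ⟨x, mem_ball_self hpos, hx⟩

/-- second difference estimate -/
lemma aux_diff2 (n : ℕ) (Ω : Set (En n)) (u : En n → ℝ) (ho : IsOpen Ω) (hu : ContDiffOn ℝ 2 u Ω)
    (x : En n) (ρ H : ℝ) (hsub : closedBall x ρ ⊆ Ω)
    (hH : ∀ z ∈ closedBall x ρ, ‖hess n u z‖ ≤ H) (y : En n) (hy : ‖y‖ ≤ ρ) :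
    |2 * u x - u (x + y) - u (x - y)| ≤ 2 * H * ‖y‖ ^ 2 := by
  have hρ : 0 ≤ ρ := (norm_nonneg y).trans hy
  have hH0 : 0 ≤ H := le_trans (by positivity) (hH x (mem_closedBall_self hρ))
  have hd1 : ∀ z ∈ closedBall x ρ, DifferentiableAt ℝ u z := fun z hz =>
    (hu.contDiffAt (ho.mem_nhds (hsub hz))).differentiableAt (by norm_num)
  have hd2 : ∀ z ∈ closedBall x ρ, DifferentiableAt ℝ (fderiv ℝ u) z := fun z hz =>
    ((hu.contDiffAt (ho.mem_nhds (hsub hz))).fderiv_right (m := 1) (by norm_num)).differentiableAt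
      (by norm_num)
  have hp : ∀ z ∈ closedBall (0 : En n) ‖y‖, x + z ∈ closedBall x ρ := by
    intro z hz
    simp at hz ⊢; linarith
  have hm : ∀ z ∈ closedBall (0 : En n) ‖y‖, x - z ∈ closedBall x ρ := by
    intro z hz
    simp [dist_eq_norm] at hz ⊢; linarith
  have key := Convex.norm_image_sub_le_of_norm_hasFDerivWithin_le (𝕜 := ℝ)
    (f := fun z => u (x + z) + u (x - z)) (f' := fun z => fderiv ℝ u (x + z) - fderiv ℝ u (x - z))
    (s := closedBall (0 : En n) ‖y‖) (C := 2 * H * ‖y‖) (x := 0) (y := y) ?_ ?_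
    (convex_closedBall _ _) (by simp) (by simp)
  · simp only [add_zero, sub_zero, Real.norm_eq_abs] at key
    rw [← abs_neg]
    calc _ = |u (x + y) + u (x - y) - (u x + u x)| := by congr 1; ring
      _ ≤ _ := key
      _ = _ := by ring
  · intro z hz
    have h1 : HasFDerivAt (fun z => u (x + z)) (fderiv ℝ u (x + z)) z := by
      have := (hd1 _ (hp z hz)).hasFDerivAt.comp z ((hasFDerivAt_id z).const_add x)
      refine this.congr_fderiv ?_
      ext; simp
    have h2 : HasFDerivAt (fun z => u (x - z)) (-fderiv ℝ u (x - z)) z := by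
      have := (hd1 _ (hm z hz)).hasFDerivAt.comp z ((hasFDerivAt_id z).const_sub x)
      refine this.congr_fderiv ?_
      ext; simp
    have := (h1.add h2).hasFDerivWithinAt (s := closedBall (0 : En n) ‖y‖)
    rw [sub_eq_add_neg]
    exact this
  · intro z hz
    have := Convex.norm_image_sub_le_of_norm_fderiv_le (𝕜 := ℝ) (f := fderiv ℝ u) (C := H)
      hd2 hH (convex_closedBall x ρ) (hm z hz) (hp z hz)
    refine this.trans ?_
    have h3 : x + z - (x - z) = (2:ℝ) • z := by rw [two_smul]; abel
    rw [h3, norm_smul]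
    have hz' : ‖z‖ ≤ ‖y‖ := by simpa using hz
    simp only [Real.norm_ofNat]
    nlinarith [mul_le_mul_of_nonneg_left hz' hH0]

/-- radial integration of a dominated kernel -/
lemma aux_radial (n : ℕ) (hn : 1 ≤ n) (s A B D ρ R : ℝ) (hs : s ∈ Set.Ioo (0:ℝ) 1)
    (hρ : 0 < ρ) (hρR : ρ ≤ R) (w : En n → ℝ) (hw : Continuous w)
    (h1 : ∀ y, ‖y‖ ≤ ρ → |w y| ≤ A * ‖y‖ ^ 2) (h2 : ∀ y, |w y| ≤ B * ‖y‖) (h3 : ∀ y, |w y| ≤ D) :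
    Integrable (fun y : En n => w y / ‖y‖ ^ ((n : ℝ) + 2 * s)) ∧
    |∫ y : En n, w y / ‖y‖ ^ ((n : ℝ) + 2 * s)| ≤
      n * volume.real (ball (0 : En n) 1) * (A * (ρ ^ (2 - 2 * s) / (2 - 2 * s))
        + B * (∫ r in ρ..R, r ^ (-(2 * s))) + D * (R ^ (-(2 * s)) / (2 * s))) := by
  obtain ⟨hs0, hs1⟩ := hs
  have : Nonempty (Fin n) := ⟨⟨0, hn⟩⟩
  have hR : 0 < R := hρ.trans_le hρR
  let g : ℝ → ℝ := fun r =>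
    (if r ≤ ρ then A * r ^ 2 else if r ≤ R then B * r else D) / r ^ ((n : ℝ) + 2 * s)
  have hpw : ∀ r : ℝ, 0 < r → ∀ k : ℝ,
      r ^ (n - 1) * (r ^ k / r ^ ((n : ℝ) + 2 * s)) = r ^ (k - 1 - 2 * s) := by
    intro r hr k
    rw [← Real.rpow_natCast, ← Real.rpow_sub hr, ← Real.rpow_add hr, Nat.cast_sub hn]
    congr 1; push_cast; ring
  let G : ℝ → ℝ := fun r => r ^ (n - 1) • g r
  have e1 : EqOn (fun r : ℝ => A * r ^ (1 - 2 * s)) G (Ioc 0 ρ) := by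
    intro r hr
    have := hpw r hr.1 2
    simp only [G, g, if_pos hr.2, smul_eq_mul]
    rw [show (1 - 2 * s) = 2 - 1 - 2 * s by ring, ← this, Real.rpow_two]; ring
  have e2 : EqOn (fun r : ℝ => B * r ^ (-(2 * s))) G (Ioc ρ R) := by
    intro r hr
    have := hpw r (hρ.trans hr.1) 1
    simp only [G, g, if_neg (not_le.2 hr.1), if_pos hr.2, smul_eq_mul]
    rw [show (-(2 * s)) = 1 - 1 - 2 * s by ring, ← this, Real.rpow_one]; ring
  have e3 : EqOn (fun r : ℝ => D * r ^ (-1 - 2 * s)) G (Ioi R) := by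
    intro r hr
    have hr' : R < r := hr
    have := hpw r (hR.trans hr') 0
    simp only [G, g, if_neg (not_le.2 hr'), if_neg (not_le.2 (hρR.trans_lt hr')), smul_eq_mul]
    rw [show (-1 - 2 * s) = 0 - 1 - 2 * s by ring, ← this, Real.rpow_zero]; ring
  have i1 : IntegrableOn G (Ioc 0 ρ) := by
    refine IntegrableOn.congr_fun ?_ e1 measurableSet_Ioc
    have := intervalIntegral.intervalIntegrable_rpow' (a := 0) (b := ρ) (r := 1 - 2 * s)
      (by linarith)
    rw [intervalIntegrable_iff_integrableOn_Ioc_of_le hρ.le] at this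
    exact this.const_mul A
  have i2 : IntegrableOn G (Ioc ρ R) := by
    refine IntegrableOn.congr_fun ?_ e2 measurableSet_Ioc
    have : IntervalIntegrable (fun r : ℝ => r ^ (-(2 * s))) volume ρ R :=
      intervalIntegral.intervalIntegrable_rpow (Or.inr (by
        rw [uIcc_of_le hρR]; simp [hρ]))
    rw [intervalIntegrable_iff_integrableOn_Ioc_of_le hρR] at this
    exact this.const_mul B
  have i3 : IntegrableOn G (Ioi R) := by
    refine IntegrableOn.congr_fun ?_ e3 measurableSet_Ioi
    exact (integrableOn_Ioi_rpow_of_lt (by linarith) hR).const_mul D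
  have u1 : Ioc 0 ρ ∪ (Ioc ρ R ∪ Ioi R) = Ioi (0:ℝ) := by
    rw [Ioc_union_Ioi_eq_Ioi hρR, Ioc_union_Ioi_eq_Ioi hρ.le]
  have iG : IntegrableOn G (Ioi 0) := by
    rw [← u1]; exact i1.union (i2.union i3)
  have hfin : Module.finrank ℝ (En n) = n := by simp
  have ig : Integrable (fun y : En n => g ‖y‖) := by
    rw [integrable_fun_norm_addHaar, hfin]; exact iG
  have hle : ∀ y : En n, ‖w y / ‖y‖ ^ ((n : ℝ) + 2 * s)‖ ≤ g ‖y‖ := by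
    intro y
    have hp : 0 ≤ ‖y‖ ^ ((n : ℝ) + 2 * s) := Real.rpow_nonneg (norm_nonneg _) _
    rw [norm_div, Real.norm_of_nonneg hp, Real.norm_eq_abs]
    refine div_le_div_of_nonneg_right ?_ hp
    split_ifs with ha hb
    · exact h1 y ha
    · exact h2 y
    · exact h3 y
  have hmeas : AEStronglyMeasurable (fun y : En n => w y / ‖y‖ ^ ((n : ℝ) + 2 * s)) := by
    refine Measurable.aestronglyMeasurable ?_
    exact hw.measurable.div (measurable_norm.pow_const _)
  refine ⟨ig.mono' hmeas (Eventually.of_forall hle), ?_⟩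
  have hI := norm_integral_le_of_norm_le ig (Eventually.of_forall hle)
  rw [Real.norm_eq_abs] at hI
  refine hI.trans (le_of_eq ?_)
  rw [integral_fun_norm_addHaar, hfin]
  have : ∫ r in Ioi (0:ℝ), r ^ (n - 1) • g r = A * (ρ ^ (2 - 2 * s) / (2 - 2 * s))
        + B * (∫ r in ρ..R, r ^ (-(2 * s))) + D * (R ^ (-(2 * s)) / (2 * s)) := by
    change ∫ r in Ioi (0:ℝ), G r = _
    rw [← u1, setIntegral_union _ (measurableSet_Ioc.union measurableSet_Ioi) i1 (i2.union i3),
      setIntegral_union _ measurableSet_Ioi i2 i3,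
      ← setIntegral_congr_fun measurableSet_Ioc e1, ← setIntegral_congr_fun measurableSet_Ioc e2,
      ← setIntegral_congr_fun measurableSet_Ioi e3, integral_const_mul, integral_const_mul,
      integral_const_mul, integral_Ioi_rpow_of_lt (by linarith) hR,
      ← intervalIntegral.integral_of_le hρ.le, ← intervalIntegral.integral_of_le hρR,
      integral_rpow (Or.inl (by linarith)), Real.zero_rpow (by linarith)]
    · rw [show 1 - 2 * s + 1 = 2 - 2 * s by ring, show -1 - 2 * s + 1 = -(2 * s) by ring,
        neg_div_neg_eq]; ring
    · rw [Set.disjoint_left]; intro r hr hr'; exact absurd hr.2 (not_le.2 hr')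
    · rw [Ioc_union_Ioi_eq_Ioi hρR, Set.disjoint_left]
      intro r hr hr'; exact absurd hr.2 (not_le.2 hr')
  rw [this]
  simp only [nsmul_eq_mul, smul_eq_mul]; ring

/-- scalar estimates -/
lemma aux_scalar (s α R : ℝ) (hs : s ∈ Set.Ioo (0:ℝ) 1) (hα : α ∈ Set.Ioo (0:ℝ) 1) (hR : 1 ≤ R) :
    ∃ C ≥ (0:ℝ), ∀ d : ℝ, 0 < d → d ≤ R →
      (d / 2) ^ (α + 1 - 2 * s) ≤ C * (1 + (if s = 1/2 then |Real.log d| else 0)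
          + (if 1/2 < s then d ^ (1 - 2*s) else 0)) ∧
      ∫ r in (d / 2)..R, r ^ (-(2 * s)) ≤ C * (1 + (if s = 1/2 then |Real.log d| else 0)
          + (if 1/2 < s then d ^ (1 - 2*s) else 0)) := by
  obtain ⟨hs0, hs1⟩ := hs
  obtain ⟨ha0, ha1⟩ := hα
  have hR0 : 0 < R := by linarith
  rcases lt_trichotomy s (1/2) with h | h | h
  · refine ⟨max (R ^ (α + 1 - 2 * s)) (R ^ (1 - 2 * s) / (1 - 2 * s)),
      le_max_of_le_left (by positivity), fun d hd hdR => ?_⟩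
    rw [if_neg h.ne, if_neg (not_lt.2 h.le)]
    simp only [add_zero, mul_one]
    constructor
    · exact le_max_of_le_left (Real.rpow_le_rpow (by positivity) (by linarith) (by linarith))
    · refine le_max_of_le_right ?_
      rw [integral_rpow (Or.inl (by linarith)), show -(2 * s) + 1 = 1 - 2 * s by ring]
      refine div_le_div_of_nonneg_right ?_ (by linarith)
      have : 0 ≤ (d / 2) ^ (1 - 2 * s) := by positivity
      linarith
  · refine ⟨max (R ^ α) (Real.log R + Real.log 2 + 1),
      le_max_of_le_left (by positivity), fun d hd hdR => ?_⟩
    rw [if_pos h, if_neg (not_lt.2 h.le)]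
    have hl : 0 ≤ |Real.log d| := abs_nonneg _
    have hlR : 0 ≤ Real.log R := Real.log_nonneg hR
    have hl2 : 0 ≤ Real.log 2 := Real.log_nonneg (by norm_num)
    constructor
    · have h1 : (d / 2) ^ (α + 1 - 2 * s) ≤ R ^ α := by
        rw [show α + 1 - 2 * s = α by rw [h]; ring]
        exact Real.rpow_le_rpow (by positivity) (by linarith) ha0.le
      have h2 : 0 ≤ R ^ α := by positivity
      calc _ ≤ R ^ α * 1 := by linarith
        _ ≤ _ := mul_le_mul (le_max_left _ _) (by linarith) zero_le_one (le_max_of_le_left h2)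
    · have h1 : ∫ r in (d / 2)..R, r ^ (-(2 * s)) = Real.log R + Real.log 2 - Real.log d := by
        have : -(2 * s) = -1 := by rw [h]; norm_num
        simp only [this, Real.rpow_neg_one]
        rw [integral_inv_of_pos (by positivity) hR0, Real.log_div hR0.ne' (by positivity),
          Real.log_div hd.ne' (by norm_num)]; ring
      rw [h1]
      calc _ ≤ (Real.log R + Real.log 2 + 1) * (1 + |Real.log d| + 0) := by
            nlinarith [neg_abs_le (Real.log d), mul_nonneg hlR hl, mul_nonneg hl2 hl]
        _ ≤ _ := mul_le_mul_of_nonneg_right (le_max_right _ _) (by linarith)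
  · have h2s : 0 < 2 * s - 1 := by linarith
    refine ⟨max (R ^ α * 2 ^ (2 * s - 1)) (2 ^ (2 * s - 1) / (2 * s - 1)),
      le_max_of_le_left (by positivity), fun d hd hdR => ?_⟩
    rw [if_neg h.ne', if_pos h]
    have hdp : 0 ≤ d ^ (1 - 2 * s) := by positivity
    have e : (d / 2) ^ (1 - 2 * s) = 2 ^ (2 * s - 1) * d ^ (1 - 2 * s) := by
      rw [Real.div_rpow hd.le (by norm_num), show 2 * s - 1 = -(1 - 2 * s) by ring,
        Real.rpow_neg (by norm_num)]
      field_simp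
    constructor
    · rw [show α + 1 - 2 * s = α + (1 - 2 * s) by ring, Real.rpow_add (by positivity), e]
      have h1 : (d / 2) ^ α ≤ R ^ α := Real.rpow_le_rpow (by positivity) (by linarith) ha0.le
      calc _ ≤ R ^ α * (2 ^ (2 * s - 1) * d ^ (1 - 2 * s)) :=
            mul_le_mul_of_nonneg_right h1 (by positivity)
        _ = (R ^ α * 2 ^ (2 * s - 1)) * d ^ (1 - 2 * s) := by ring
        _ ≤ _ := mul_le_mul (le_max_left _ _) (by linarith) hdp
            (le_max_of_le_left (by positivity))
    · rw [integral_rpow (Or.inr ⟨by linarith, by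
        rw [uIcc_of_le (by linarith)]; simp [hd]⟩), show -(2 * s) + 1 = 1 - 2 * s by ring, e]
      have h3 : 0 ≤ R ^ (1 - 2 * s) := by positivity
      calc _ = (2 ^ (2 * s - 1) * d ^ (1 - 2 * s) - R ^ (1 - 2 * s)) / (2 * s - 1) := by
            rw [← neg_div_neg_eq]; congr 1 <;> ring
        _ ≤ (2 ^ (2 * s - 1) * d ^ (1 - 2 * s)) / (2 * s - 1) :=
            div_le_div_of_nonneg_right (by linarith) h2s.le
        _ = (2 ^ (2 * s - 1) / (2 * s - 1)) * d ^ (1 - 2 * s) := by ring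
        _ ≤ _ := mul_le_mul (le_max_right _ _) (by linarith) hdp
            (le_max_of_le_left (by positivity))

/-- bound on `(-Δ)ˢu` from a Hessian blow-up estimate: if `u` is bounded
and Lipschitz on `ℝⁿ`, `C²` in a bounded open set `Ω` with `|D²u| ≤ K dist(·,∂Ω)^{α-1}`,
then with a constant `C` depending only on `n, s, α, K, ‖u‖_{C^{0,1}(ℝⁿ)}` and `diam Ω`,
the fractional Laplacian integral converges absolutely in `Ω` and
`|(-Δ)ˢu(x)| ≤ C(1 + 𝟙_{s=1/2}|log dist(x,∂Ω)| + 𝟙_{s>1/2} dist(x,∂Ω)^{1-2s})`. -/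
theorem fracLap_bound_of_hessian_bound (n : ℕ) (hn : 1 ≤ n) (s α K M R : ℝ) (L : ℝ≥0)
    (hs : s ∈ Set.Ioo (0:ℝ) 1) (hα : α ∈ Set.Ioo (0:ℝ) 1) (hK : 0 < K) :
    ∃ C > (0:ℝ), ∀ (Ω : Set (En n)) (u : En n → ℝ),
      IsOpen Ω → IsBounded Ω → Metric.diam Ω ≤ R →
      (∀ x, |u x| ≤ M) → LipschitzWith L u →
      ContDiffOn ℝ 2 u Ω →
      (∀ x ∈ Ω, ‖hess n u x‖ ≤ K * infDist x (frontier Ω) ^ (α - 1)) →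
      ∀ x ∈ Ω,
        Integrable (fun y : En n =>
          (2 * u x - u (x + y) - u (x - y)) / ‖y‖ ^ ((n : ℝ) + 2 * s)) ∧
        |fracLap n s u x| ≤ C * (1
          + (if s = 1/2 then |Real.log (infDist x (frontier Ω))| else 0)
          + (if 1/2 < s then infDist x (frontier Ω) ^ (1 - 2*s) else 0)) := by
  obtain ⟨C₀, hC₀, hC⟩ := aux_scalar s α (max R 1) hs hα (le_max_right _ _)
  have hs0 := hs.1
  have hs1 := hs.2
  have hR0 : (0:ℝ) < max R 1 := lt_max_of_lt_right one_pos
  have hV : 0 ≤ (n:ℝ) * volume.real (ball (0 : En n) 1) := by positivity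
  have hQ : 0 ≤ 2 * K * C₀ / (2 - 2 * s) := div_nonneg (by positivity) (by linarith)
  have hT : 0 ≤ 4 * |M| * ((max R 1) ^ (-(2 * s)) / (2 * s)) := by positivity
  refine ⟨|cK n s / 2| * (n * volume.real (ball (0 : En n) 1) * (2 * K * C₀ / (2 - 2 * s)
    + 2 * L * C₀ + 4 * |M| * ((max R 1) ^ (-(2 * s)) / (2 * s)))) + 1, by positivity, ?_⟩
  intro Ω u ho hb hR hM hL hu hH x hx
  obtain ⟨hd, hdR, hball⟩ := aux_geom n hn R Ω ho hb hR x hx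
  obtain ⟨hc1, hc2⟩ := hC _ hd (hdR.trans (le_max_left _ _))
  set d := infDist x (frontier Ω) with hd_def
  set E : ℝ := 1 + (if s = 1/2 then |Real.log d| else 0)
    + (if 1/2 < s then d ^ (1 - 2*s) else 0) with hE
  have hE1 : 1 ≤ E := by
    have h1 : 0 ≤ (if s = 1/2 then |Real.log d| else 0) := by split_ifs <;> positivity
    have h2 : 0 ≤ (if 1/2 < s then d ^ (1 - 2*s) else 0) := by split_ifs <;> positivity
    linarith
  have hsub : closedBall x (d / 2) ⊆ Ω :=
    (closedBall_subset_ball (by linarith)).trans hball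
  have hHess : ∀ z ∈ closedBall x (d / 2), ‖hess n u z‖ ≤ K * (d / 2) ^ (α - 1) := by
    intro z hz
    refine (hH z (hsub hz)).trans (mul_le_mul_of_nonneg_left ?_ hK.le)
    refine Real.rpow_le_rpow_of_nonpos (by positivity) ?_ (by linarith [hα.2])
    have h1 := infDist_le_infDist_add_dist (x := x) (y := z) (s := frontier Ω)
    rw [mem_closedBall, dist_comm] at hz
    linarith
  have hw : Continuous (fun y => 2 * u x - u (x + y) - u (x - y)) := by
    have := hL.continuous
    fun_prop
  obtain ⟨hint, hbd⟩ := aux_radial n hn s (2 * (K * (d / 2) ^ (α - 1))) (2 * L) (4 * |M|) (d / 2)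
    (max R 1) hs (by positivity) (by linarith [le_max_left R 1])
    (fun y => 2 * u x - u (x + y) - u (x - y)) hw
    (fun y hy => aux_diff2 n Ω u ho hu x (d / 2) _ hsub hHess y hy)
    (fun y => by
      have h1 := hL.dist_le_mul (x + y) x
      have h2 := hL.dist_le_mul (x - y) x
      simp only [dist_eq_norm, add_sub_cancel_left, sub_sub_cancel_left, norm_neg,
        Real.norm_eq_abs] at h1 h2
      rw [abs_le] at h1 h2 ⊢
      constructor <;> linarith [h1.1, h1.2, h2.1, h2.2])
    (fun y => by
      have h1 := (hM x).trans (le_abs_self M)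
      have h2 := (hM (x + y)).trans (le_abs_self M)
      have h3 := (hM (x - y)).trans (le_abs_self M)
      rw [abs_le] at h1 h2 h3 ⊢
      constructor <;> linarith [h1.1, h1.2, h2.1, h2.2, h3.1, h3.2])
  refine ⟨hint, ?_⟩
  have hA : 2 * (K * (d / 2) ^ (α - 1)) * ((d / 2) ^ (2 - 2 * s) / (2 - 2 * s))
      ≤ 2 * K * C₀ / (2 - 2 * s) * E := by
    have e : (d / 2) ^ (α + 1 - 2 * s) = (d / 2) ^ (α - 1) * (d / 2) ^ (2 - 2 * s) := by
      rw [← Real.rpow_add (by positivity)]; congr 1; ring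
    calc _ = 2 * K / (2 - 2 * s) * (d / 2) ^ (α + 1 - 2 * s) := by rw [e]; ring
      _ ≤ 2 * K / (2 - 2 * s) * (C₀ * E) :=
        mul_le_mul_of_nonneg_left hc1 (div_nonneg (by positivity) (by linarith))
      _ = _ := by ring
  have hB : 2 * (L:ℝ) * (∫ r in (d / 2)..(max R 1), r ^ (-(2 * s))) ≤ 2 * L * C₀ * E := by
    rw [mul_assoc (2 * (L:ℝ))]
    exact mul_le_mul_of_nonneg_left hc2 (by positivity)
  have hD : 4 * |M| * ((max R 1) ^ (-(2 * s)) / (2 * s))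
      ≤ 4 * |M| * ((max R 1) ^ (-(2 * s)) / (2 * s)) * E := le_mul_of_one_le_right hT hE1
  rw [fracLap, abs_mul]
  calc _ ≤ |cK n s / 2| * (n * volume.real (ball (0 : En n) 1) * ((2 * K * C₀ / (2 - 2 * s)
    + 2 * L * C₀ + 4 * |M| * ((max R 1) ^ (-(2 * s)) / (2 * s))) * E)) := by
        refine mul_le_mul_of_nonneg_left (hbd.trans (mul_le_mul_of_nonneg_left ?_ hV))
          (abs_nonneg _)
        linarith
    _ ≤ _ := by
      have : (0:ℝ) ≤ E := by linarith
      refine le_of_sub_nonneg (le_of_le_of_eq this ?_)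
      ring
end
end

section
/- Let n ≥ 1, s ∈ (0,1), C₀ > 0, let Ω ⊂ ℝⁿ be a bounded open set, and let u : ℝⁿ → ℝ be bounded, Lipschitz, and twice continuously differentiable in Ω, with |D²u(x)| ≤ C₀·dist(x,∂Ω)^{−1} for all x ∈ Ω and |u(x)| ≤ C₀·dist(x,Ωᶜ) for all x ∈ ℝⁿ. Then there is a constant C (depending on n, s, C₀ and ‖u‖_{C^{0,1}(ℝⁿ)}) such that for every β ∈ [1−s, 2−s] and every ϱ ∈ (0,1), 𝔤 = (−Δ)^{s/2}u satisfies ‖𝔤‖_{C^{β}(Ω̆_ϱ)} ≤ C·ϱ^{1−s−β}, where Ω̆_ϱ = {x ∈ ℝⁿ : dist(x,∂Ω) ≥ ϱ}. -/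
open MeasureTheory Real Set Metric Bornology Filter
open scoped RealInnerProductSpace ENNReal NNReal Pointwise

noncomputable section

/-- The scale-invariant kernel bound. -/
theorem ker_int_one (n : ℕ) (hn : 1 ≤ n) (s : ℝ) (hs : s ∈ Set.Ioo (0:ℝ) 1) :
    Integrable (fun z : En n => min ‖z‖ 1 / ‖z‖ ^ ((n : ℝ) + s)) := by
  obtain ⟨hs0, hs1⟩ := hs
  have : Nonempty (Fin n) := ⟨⟨0, hn⟩⟩
  have : Nontrivial (En n) := inferInstance
  have key := (integrable_fun_norm_addHaar (E := En n) volume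
    (f := fun t : ℝ => min t 1 / t ^ ((n : ℝ) + s)))
  refine key.2 ?_
  rw [finrank_euclideanSpace_fin]
  have hpow : ∀ t : ℝ, 0 < t → t ^ (n - 1) / t ^ ((n : ℝ) + s) = t ^ (-1 - s) := by
    intro t ht
    rw [← Real.rpow_natCast, ← Real.rpow_sub ht, Nat.cast_sub hn]
    congr 1
    push_cast
    ring
  rw [← Ioc_union_Ioi_eq_Ioi (zero_le_one (α := ℝ))]
  refine IntegrableOn.union ?_ ?_
  · have h1 : IntegrableOn (fun t : ℝ => t ^ (-s)) (Ioc 0 1) := by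
      have := intervalIntegral.intervalIntegrable_rpow' (a := 0) (b := 1) (r := -s) (by linarith)
      rwa [intervalIntegrable_iff_integrableOn_Ioc_of_le zero_le_one] at this
    refine h1.congr_fun ?_ measurableSet_Ioc
    intro t ht
    simp only [smul_eq_mul]
    rw [min_eq_left ht.2, mul_div_assoc', mul_comm, mul_div_assoc, hpow t ht.1]
    rw [← Real.rpow_one_add' ht.1.le (by linarith)]
    congr 1
    ring
  · have h1 : IntegrableOn (fun t : ℝ => t ^ (-1 - s)) (Ioi 1) :=
      integrableOn_Ioi_rpow_of_lt (by linarith) zero_lt_one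
    refine h1.congr_fun ?_ measurableSet_Ioi
    intro t ht
    have ht' : (1:ℝ) < t := ht
    simp only [smul_eq_mul]
    rw [min_eq_right ht'.le, mul_div_assoc', mul_one, hpow t (by linarith)]

theorem ker_int (n : ℕ) (hn : 1 ≤ n) (s : ℝ) (hs : s ∈ Set.Ioo (0:ℝ) 1) :
    ∃ K > (0:ℝ), ∀ a b : ℝ, 0 < a → 0 < b →
      Integrable (fun z : En n => min (a * ‖z‖) b / ‖z‖ ^ ((n : ℝ) + s)) ∧
      ∫ z : En n, min (a * ‖z‖) b / ‖z‖ ^ ((n : ℝ) + s) ≤ K * (a ^ s * b ^ (1 - s)) := by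
  have h1 := ker_int_one n hn s hs
  obtain ⟨hs0, hs1⟩ := hs
  set I := ∫ z : En n, min ‖z‖ 1 / ‖z‖ ^ ((n : ℝ) + s) with hI
  have hI0 : 0 ≤ I := by
    apply integral_nonneg
    intro z
    positivity
  refine ⟨I + 1, by linarith, ?_⟩
  intro a b ha hb
  have hR : 0 < a / b := by positivity
  have heq : (fun z : En n => min (a * ‖z‖) b / ‖z‖ ^ ((n : ℝ) + s)) =
      fun z : En n => (b * (a / b) ^ ((n : ℝ) + s)) *
        (fun z : En n => min ‖z‖ 1 / ‖z‖ ^ ((n : ℝ) + s)) ((a / b) • z) := by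
    funext z
    simp only [norm_smul, Real.norm_eq_abs, abs_of_pos hR]
    rw [Real.mul_rpow hR.le (norm_nonneg z)]
    have h2 : min (a * ‖z‖) b = b * min (a / b * ‖z‖) 1 := by
      rw [mul_min_of_nonneg _ _ hb.le]
      congr 1
      · field_simp
      · ring
    rw [h2]
    have h3 : (a / b) ^ ((n : ℝ) + s) ≠ 0 := (Real.rpow_pos_of_pos hR _).ne'
    by_cases hz : ‖z‖ ^ ((n : ℝ) + s) = 0
    · rw [hz]; simp
    · field_simp
  rw [heq]
  refine ⟨(h1.comp_smul hR.ne').const_mul _, ?_⟩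
  rw [integral_const_mul, Measure.integral_comp_smul volume (fun z : En n => min ‖z‖ 1 / ‖z‖ ^ ((n : ℝ) + s)),
    ← hI, finrank_euclideanSpace_fin, smul_eq_mul]
  have h4 : b * (a / b) ^ ((n : ℝ) + s) * (|((a / b) ^ n)⁻¹| * I) = I * (a ^ s * b ^ (1 - s)) := by
    rw [abs_of_pos (by positivity), Real.rpow_add hR, Real.rpow_natCast, Real.rpow_sub hb,
      Real.div_rpow ha.le hb.le, Real.rpow_one]
    field_simp
  rw [h4]
  have : 0 ≤ a ^ s * b ^ (1 - s) := by positivity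
  nlinarith

/-- The kernel bound as a predicate on the constant `K`. -/
def KerB (n : ℕ) (s K : ℝ) : Prop :=
  ∀ a b : ℝ, 0 < a → 0 < b →
      Integrable (fun z : En n => min (a * ‖z‖) b * ‖z‖ ^ (-((n : ℝ) + s))) ∧
      ∫ z : En n, min (a * ‖z‖) b * ‖z‖ ^ (-((n : ℝ) + s)) ≤ K * (a ^ s * b ^ (1 - s))

theorem exists_KerB (n : ℕ) (hn : 1 ≤ n) (s : ℝ) (hs : s ∈ Set.Ioo (0:ℝ) 1) :
    ∃ K > (0:ℝ), KerB n s K := by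
  obtain ⟨K, hK, h⟩ := ker_int n hn s hs
  refine ⟨K, hK, ?_⟩
  intro a b ha hb
  have heq : (fun z : En n => min (a * ‖z‖) b * ‖z‖ ^ (-((n : ℝ) + s))) =
      fun z : En n => min (a * ‖z‖) b / ‖z‖ ^ ((n : ℝ) + s) := by
    funext z
    rw [Real.rpow_neg (norm_nonneg z), div_eq_mul_inv]
  rw [heq]
  exact h a b ha hb

theorem ker_bound {n : ℕ} {s K : ℝ} (hK : KerB n s K) {F : Type*} [NormedAddCommGroup F]
    [NormedSpace ℝ F] {f : En n → F} (hf : AEStronglyMeasurable f volume) {a b : ℝ} (ha : 0 < a)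
    (hb : 0 < b) (h : ∀ᵐ z : En n, ‖f z‖ ≤ min (a * ‖z‖) b * ‖z‖ ^ (-((n : ℝ) + s))) :
    Integrable f ∧ ‖∫ z, f z‖ ≤ K * (a ^ s * b ^ (1 - s)) := by
  obtain ⟨h1, h2⟩ := hK a b ha hb
  exact ⟨h1.mono' hf h, (norm_integral_le_of_norm_le h1 h).trans h2⟩

theorem ae_ne_zero {n : ℕ} (hn : 1 ≤ n) : ∀ᵐ z : En n, z ≠ 0 := by
  have : Nonempty (Fin n) := ⟨⟨0, hn⟩⟩
  have : Nontrivial (En n) := inferInstance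
  exact compl_mem_ae_iff.2 (measure_singleton 0)

/-- far kernel -/
def kfar (n : ℕ) (p ρ : ℝ) (z : En n) : ℝ := (max ‖z‖ ρ) ^ (-p)

/-- near kernel -/
def knear (n : ℕ) (p ρ : ℝ) (z : En n) : ℝ := ‖z‖ ^ (-p) - kfar n p ρ z

theorem kfar_nonneg {n : ℕ} {p ρ : ℝ} (hρ : 0 < ρ) (z : En n) : 0 ≤ kfar n p ρ z := by
  unfold kfar
  have : 0 < max ‖z‖ ρ := lt_max_of_lt_right hρ
  positivity

theorem kfar_cont {n : ℕ} {p ρ : ℝ} (hρ : 0 < ρ) : Continuous (kfar n p ρ) := by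
  unfold kfar
  refine Continuous.rpow_const (by fun_prop) ?_
  intro z
  left
  exact (lt_max_of_lt_right hρ).ne'

theorem kfar_meas {n : ℕ} {p ρ : ℝ} (hρ : 0 < ρ) : Measurable (kfar n p ρ) :=
  (kfar_cont hρ).measurable

theorem knear_meas {n : ℕ} {p ρ : ℝ} (hρ : 0 < ρ) : Measurable (knear n p ρ) := by
  unfold knear
  exact (measurable_norm.pow_const _).sub (kfar_meas hρ)

theorem knear_zero {n : ℕ} {p ρ : ℝ} {z : En n} (hz : ρ ≤ ‖z‖) : knear n p ρ z = 0 := by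
  unfold knear kfar
  rw [max_eq_left hz, sub_self]

theorem knear_abs {n : ℕ} {p ρ : ℝ} (hp : 0 ≤ p) (hρ : 0 < ρ) {z : En n} (hz : z ≠ 0) :
    |knear n p ρ z| ≤ ‖z‖ ^ (-p) := by
  have h0 := kfar_nonneg (p := p) hρ z
  have h1 : kfar n p ρ z ≤ ‖z‖ ^ (-p) :=
    Real.rpow_le_rpow_of_nonpos (norm_pos_iff.2 hz) (le_max_left _ _) (by linarith)
  unfold knear
  rw [abs_of_nonneg (by linarith)]
  linarith

theorem kfar_le {n : ℕ} {p ρ : ℝ} (hp : 1 ≤ p) (hρ : 0 < ρ) {z : En n} (hz : z ≠ 0) :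
    kfar n p ρ z ≤ min (ρ⁻¹ * ‖z‖) 1 * ‖z‖ ^ (-p) := by
  have hz' := norm_pos_iff.2 hz
  unfold kfar
  rcases le_total ρ ‖z‖ with h | h
  · rw [max_eq_left h, min_eq_right, one_mul]
    rw [inv_mul_eq_div, one_le_div hρ]; exact h
  · rw [max_eq_right h, min_eq_left]
    · have h1 : ρ ^ (-p) = ρ⁻¹ * ρ ^ (1 - p) := by
        rw [Real.rpow_sub hρ, Real.rpow_neg hρ.le, Real.rpow_one]
        field_simp
      have h2 : ‖z‖ * ‖z‖ ^ (-p) = ‖z‖ ^ (1 - p) := by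
        rw [sub_eq_add_neg, Real.rpow_add hz', Real.rpow_one]
      rw [h1, mul_assoc, h2]
      have := Real.rpow_le_rpow_of_nonpos hz' h (z := 1 - p) (by linarith)
      gcongr
    · rw [inv_mul_eq_div, div_le_one hρ]; exact h

theorem kfar_lip {n : ℕ} {p ρ : ℝ} (hp : 1 ≤ p) (hρ : 0 < ρ) :
    LipschitzWith (Real.toNNReal (p * ρ ^ (-p - 1))) (kfar n p ρ) := by
  have hc : 0 ≤ p * ρ ^ (-p - 1) := by positivity
  have h1 : ∀ a ∈ Ici ρ, ∀ b ∈ Ici ρ, ‖b ^ (-p) - a ^ (-p)‖ ≤ (p * ρ ^ (-p - 1)) * ‖b - a‖ := by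
    intro a ha b hb
    refine Convex.norm_image_sub_le_of_norm_hasDerivWithin_le (f := fun t : ℝ => t ^ (-p))
      (f' := fun t => -p * t ^ (-p - 1)) (s := Ici ρ) ?_ ?_ (convex_Ici ρ) ha hb
    · intro t ht
      have ht' : 0 < t := lt_of_lt_of_le hρ ht
      exact (Real.hasDerivAt_rpow_const (Or.inl ht'.ne')).hasDerivWithinAt
    · intro t ht
      have ht' : 0 < t := lt_of_lt_of_le hρ ht
      rw [norm_mul, norm_neg, Real.norm_of_nonneg (by linarith),
        Real.norm_of_nonneg (by positivity)]
      have := Real.rpow_le_rpow_of_nonpos hρ ht (z := -p - 1) (by linarith)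
      gcongr
  refine LipschitzWith.of_dist_le_mul ?_
  intro x y
  rw [Real.coe_toNNReal _ hc, dist_eq_norm, dist_eq_norm]
  unfold kfar
  refine (h1 _ (le_max_right ‖y‖ ρ) _ (le_max_right ‖x‖ ρ)).trans ?_
  have h2 : ‖max ‖x‖ ρ - max ‖y‖ ρ‖ ≤ ‖x - y‖ := by
    rw [Real.norm_eq_abs]
    exact (abs_max_sub_max_le_abs _ _ _).trans (abs_norm_sub_norm_le x y)
  gcongr

theorem kfar_fderiv {n : ℕ} {p ρ : ℝ} (hp : 1 ≤ p) (hρ : 0 < ρ) (z : En n) :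
    ‖fderiv ℝ (kfar n p ρ) z‖ ≤ p * ρ⁻¹ * (min (ρ⁻¹ * ‖z‖) 1 * ‖z‖ ^ (-p)) := by
  rcases lt_trichotomy ‖z‖ ρ with h | h | h
  · have h1 : kfar n p ρ =ᶠ[nhds z] fun _ => ρ ^ (-p) := by
      filter_upwards [(continuous_norm.tendsto z).eventually_lt_const h] with w hw
      unfold kfar
      rw [max_eq_right hw.le]
    rw [h1.fderiv_eq]
    simp only [fderiv_fun_const, Pi.zero_apply, norm_zero]
    positivity
  · have h1 := norm_fderiv_le_of_lipschitz ℝ (x₀ := z) (kfar_lip (n := n) hp hρ)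
    rw [Real.coe_toNNReal _ (by positivity)] at h1
    refine h1.trans (le_of_eq ?_)
    rw [h, inv_mul_cancel₀ hρ.ne', min_self, one_mul, Real.rpow_sub hρ, Real.rpow_one]
    field_simp
  · have hz : 0 < ‖z‖ := hρ.trans h
    have hz0 : z ≠ 0 := norm_pos_iff.1 hz
    have h1 : kfar n p ρ =ᶠ[nhds z] fun w => ‖w‖ ^ (-p) := by
      filter_upwards [(continuous_norm.tendsto z).eventually_const_lt h] with w hw
      unfold kfar
      rw [max_eq_left hw.le]
    have hd : DifferentiableAt ℝ (fun w : En n => ‖w‖) z :=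
      (contDiffAt_norm ℝ hz0 (n := 1)).differentiableAt (by norm_num)
    have h2 := (Real.hasDerivAt_rpow_const (x := ‖z‖) (p := -p)
      (Or.inl hz.ne')).comp_hasFDerivAt z hd.hasFDerivAt
    have h3 : fderiv ℝ (fun w : En n => ‖w‖ ^ (-p)) z = _ := h2.fderiv
    have h4 : ‖fderiv ℝ (fun w : En n => ‖w‖) z‖ ≤ 1 := by
      have := norm_fderiv_le_of_lipschitz ℝ (x₀ := z) (lipschitzWith_one_norm (E := En n))
      simpa using this
    rw [h1.fderiv_eq, h3, norm_smul, norm_mul, norm_neg, Real.norm_of_nonneg (by linarith),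
      Real.norm_of_nonneg (by positivity), min_eq_right, one_mul]
    · have h5 : ‖z‖ ^ (-p - 1) ≤ ρ⁻¹ * ‖z‖ ^ (-p) := by
        rw [Real.rpow_sub hz, Real.rpow_one, div_eq_inv_mul]
        gcongr
      calc p * ‖z‖ ^ (-p - 1) * ‖fderiv ℝ (fun w : En n => ‖w‖) z‖
          ≤ p * (ρ⁻¹ * ‖z‖ ^ (-p)) * 1 := by gcongr
        _ = _ := by ring
    · rw [inv_mul_eq_div, one_le_div hρ]; exact h.le

section far

variable {n : ℕ} {s K : ℝ}

theorem kfar_int (hn : 1 ≤ n) (hs : s ∈ Set.Ioo (0:ℝ) 1) (hK : KerB n s K) {ρ : ℝ} (hρ : 0 < ρ) :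
    Integrable (kfar n ((n : ℝ) + s) ρ) ∧ ∫ z, kfar n ((n : ℝ) + s) ρ z ≤ K * (ρ⁻¹) ^ s := by
  have hp : 1 ≤ (n : ℝ) + s := by
    have : (1 : ℝ) ≤ n := by exact_mod_cast hn
    linarith [hs.1]
  obtain ⟨h1, h2⟩ := ker_bound hK (f := kfar n ((n : ℝ) + s) ρ)
    (kfar_meas hρ).aestronglyMeasurable (a := ρ⁻¹) (b := 1) (by positivity) one_pos (by
      filter_upwards [ae_ne_zero hn] with z hz
      rw [Real.norm_of_nonneg (kfar_nonneg hρ z)]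
      exact kfar_le hp hρ hz)
  refine ⟨h1, ?_⟩
  rw [Real.one_rpow, mul_one] at h2
  exact (le_abs_self _).trans h2

theorem kfar_fderiv_int (hn : 1 ≤ n) (hs : s ∈ Set.Ioo (0:ℝ) 1) (hK : KerB n s K)
    {ρ : ℝ} (hρ : 0 < ρ) :
    Integrable (fun z => ‖fderiv ℝ (kfar n ((n : ℝ) + s) ρ) z‖) ∧
      ∫ z, ‖fderiv ℝ (kfar n ((n : ℝ) + s) ρ) z‖ ≤ ((n : ℝ) + s) * ρ⁻¹ * (K * (ρ⁻¹) ^ s) := by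
  have hp : 1 ≤ (n : ℝ) + s := by
    have : (1 : ℝ) ≤ n := by exact_mod_cast hn
    linarith [hs.1]
  obtain ⟨h1, h2⟩ := hK ρ⁻¹ 1 (by positivity) one_pos
  rw [Real.one_rpow, mul_one] at h2
  have h3 := h1.const_mul (((n : ℝ) + s) * ρ⁻¹)
  have h4 : Integrable (fun z => ‖fderiv ℝ (kfar n ((n : ℝ) + s) ρ) z‖) := by
    refine h3.mono' (measurable_fderiv ℝ _).norm.aestronglyMeasurable (Eventually.of_forall ?_)
    intro z
    rw [norm_norm]
    exact kfar_fderiv hp hρ z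
  refine ⟨h4, ?_⟩
  refine (integral_mono h4 h3 (fun z => kfar_fderiv hp hρ z)).trans ?_
  rw [integral_const_mul]
  gcongr

/-- The far part. -/
def Hfar (n : ℕ) (p ρ : ℝ) (u : En n → ℝ) (x : En n) : ℝ :=
  ∫ z : En n, u (x + z) * kfar n p ρ z

def Hfar' (n : ℕ) (p ρ : ℝ) (u : En n → ℝ) (x : En n) : En n →L[ℝ] ℝ :=
  - ∫ z : En n, u (x + z) • fderiv ℝ (kfar n p ρ) z

theorem Hfar_hasFDerivAt {p ρ M : ℝ} (hp : 1 ≤ p) (hρ : 0 < ρ) {u : En n → ℝ}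
    (hk : Integrable (kfar n p ρ)) (hu : Continuous u) (hM : ∀ x, |u x| ≤ M)
    (hui : Integrable u) (x : En n) :
    HasFDerivAt (Hfar n p ρ u) (Hfar' n p ρ u x) x := by
  have e1 : Hfar n p ρ u = fun x => ∫ w : En n, u w * kfar n p ρ (w - x) := by
    funext x
    unfold Hfar
    rw [← integral_add_left_eq_self (fun w => u w * kfar n p ρ (w - x)) x]
    simp only [add_sub_cancel_left]
  have e2 : Hfar' n p ρ u x = ∫ w : En n, u w • (-(fderiv ℝ (kfar n p ρ) (w - x))) := by
    unfold Hfar'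
    rw [← integral_add_left_eq_self (fun w => u w • (-(fderiv ℝ (kfar n p ρ) (w - x)))) x]
    simp only [add_sub_cancel_left, smul_neg]
    rw [integral_neg]
  rw [e1, e2]
  have hlip := kfar_lip (n := n) hp hρ
  have hc : 0 ≤ p * ρ ^ (-p - 1) := by positivity
  refine (hasFDerivAt_integral_of_dominated_loc_of_lip' (μ := volume) (s := univ)
    (bound := fun w => |u w| * (p * ρ ^ (-p - 1))) univ_mem ?_ ?_ ?_ ?_ ?_ ?_).2
  · intro x _
    exact (hu.mul ((kfar_cont hρ).comp (continuous_id.sub continuous_const))).aestronglyMeasurable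
  · refine Integrable.bdd_mul (c := M) (hk.comp_sub_right x) hu.aestronglyMeasurable ?_
    exact Eventually.of_forall fun w => hM w
  · refine hu.aestronglyMeasurable.smul ?_
    exact (((measurable_fderiv ℝ _).comp
      (measurable_id.sub_const x)).neg).aestronglyMeasurable
  · refine Eventually.of_forall fun w y _ => ?_
    rw [← mul_sub, norm_mul, Real.norm_eq_abs, mul_assoc]
    have := hlip.dist_le_mul (w - y) (w - x)
    rw [Real.coe_toNNReal _ hc, dist_eq_norm, dist_eq_norm, sub_sub_sub_cancel_left,
      norm_sub_rev x y] at this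
    gcongr
  · exact hui.abs.mul_const _
  · have h1 : ∀ᵐ z : En n, DifferentiableAt ℝ (kfar n p ρ) z := hlip.ae_differentiableAt
    have h2 := (measurePreserving_sub_right (volume : Measure (En n)) x).quasiMeasurePreserving.ae h1
    filter_upwards [h2] with w hw
    have h3 := (hw.hasFDerivAt.comp x ((hasFDerivAt_id x).const_sub w)).const_mul (u w)
    have h4 : u w • (-(fderiv ℝ (kfar n p ρ) (w - x))) = u w • (fderiv ℝ (kfar n p ρ) (w - x)).comp
        (-ContinuousLinearMap.id ℝ (En n)) := by
      ext v
      simp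
    rw [h4]
    exact h3

theorem Hfar'_bound {p ρ L : ℝ} (hp : 1 ≤ p) (hρ : 0 < ρ) {u : En n → ℝ}
    (hk : Integrable (kfar n p ρ)) (hu : Continuous u) {M : ℝ} (hM : ∀ x, |u x| ≤ M)
    (hui : Integrable u) (hL0 : 0 ≤ L) (hL : ∀ x y, |u x - u y| ≤ L * ‖x - y‖) (x : En n) :
    ‖Hfar' n p ρ u x‖ ≤ L * ∫ z, kfar n p ρ z := by
  have hI : 0 ≤ ∫ z, kfar n p ρ z := integral_nonneg (fun z => kfar_nonneg hρ z)
  have hint : ∀ x, Integrable (fun z => u (x + z) * kfar n p ρ z) := fun x =>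
    Integrable.bdd_mul (c := M) hk (hu.comp (continuous_const.add continuous_id)).aestronglyMeasurable
      (Eventually.of_forall fun w => hM _)
  refine (Hfar_hasFDerivAt hp hρ hk hu hM hui x).le_of_lip' (by positivity) ?_
  refine Eventually.of_forall fun y => ?_
  unfold Hfar
  rw [← integral_sub (hint y) (hint x)]
  calc _ ≤ ∫ z, (L * ‖y - x‖) * kfar n p ρ z := by
        refine norm_integral_le_of_norm_le (hk.const_mul _) (Eventually.of_forall fun z => ?_)
        rw [← sub_mul, norm_mul, Real.norm_of_nonneg (kfar_nonneg hρ z)]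
        refine mul_le_mul_of_nonneg_right ?_ (kfar_nonneg hρ z)
        have := hL (y + z) (x + z)
        rwa [add_sub_add_right_eq_sub] at this
    _ = _ := by rw [integral_const_mul]; ring

theorem Hfar'_lip {p ρ L : ℝ} {u : En n → ℝ}
    (hk : Integrable (fun z => ‖fderiv ℝ (kfar n p ρ) z‖)) (hu : Continuous u) {M : ℝ}
    (hM : ∀ x, |u x| ≤ M)
    (hL : ∀ x y, |u x - u y| ≤ L * ‖x - y‖) (x y : En n) :
    ‖Hfar' n p ρ u x - Hfar' n p ρ u y‖ ≤ L * ‖x - y‖ * ∫ z, ‖fderiv ℝ (kfar n p ρ) z‖ := by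
  have hint : ∀ x, Integrable (fun z => u (x + z) • fderiv ℝ (kfar n p ρ) z) := by
    intro x
    refine (hk.const_mul M).mono' ?_ (Eventually.of_forall fun z => ?_)
    · exact (hu.comp (continuous_const.add continuous_id)).aestronglyMeasurable.smul
        (measurable_fderiv ℝ _).aestronglyMeasurable
    · rw [norm_smul]
      exact mul_le_mul_of_nonneg_right (hM _) (norm_nonneg _)
  unfold Hfar'
  rw [neg_sub_neg, ← integral_sub (hint y) (hint x), ← integral_const_mul]
  refine norm_integral_le_of_norm_le (hk.const_mul _) (Eventually.of_forall fun z => ?_)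
  rw [← sub_smul, norm_smul]
  refine mul_le_mul_of_nonneg_right ?_ (norm_nonneg _)
  have := hL (y + z) (x + z)
  rwa [add_sub_add_right_eq_sub, norm_sub_rev] at this

end far

section near

variable {n : ℕ} {s K : ℝ}

theorem min_bound {a b t X k : ℝ} (hk : 0 ≤ k) (h1 : X ≤ a * t) (h2 : X ≤ b) :
    X * k ≤ min (a * t) b * k :=
  mul_le_mul_of_nonneg_right (le_min h1 h2) hk

/-- The near part. -/
def Nn (n : ℕ) (p ρ : ℝ) (u : En n → ℝ) (x : En n) : ℝ :=
  ∫ z : En n, knear n p ρ z * (u x - u (x + z))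

def Nn' (n : ℕ) (p ρ : ℝ) (u : En n → ℝ) (x : En n) : En n →L[ℝ] ℝ :=
  ∫ z : En n, knear n p ρ z • (fderiv ℝ u x - fderiv ℝ u (x + z))

theorem near_norm_le {F : Type*} [NormedAddCommGroup F] [NormedSpace ℝ F] {p ρ a b : ℝ}
    (hp : 0 ≤ p) (hρ : 0 < ρ) {z : En n} (hz : z ≠ 0) {v : F} (ha : 0 ≤ a) (hb : 0 ≤ b)
    (h1 : ‖z‖ < ρ → ‖v‖ ≤ a * ‖z‖) (h2 : ‖z‖ < ρ → ‖v‖ ≤ b) :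
    ‖knear n p ρ z • v‖ ≤ min (a * ‖z‖) b * ‖z‖ ^ (-p) := by
  by_cases h : ‖z‖ < ρ
  · rw [norm_smul, mul_comm]
    have h3 := knear_abs hp hρ hz
    calc _ ≤ ‖v‖ * ‖z‖ ^ (-p) := by
          exact mul_le_mul_of_nonneg_left h3 (norm_nonneg v)
      _ ≤ _ := min_bound (by positivity) (h1 h) (h2 h)
  · rw [knear_zero (not_lt.1 h), zero_smul, norm_zero]
    positivity

theorem Nn'_aux_meas {p ρ : ℝ} (hρ : 0 < ρ) (u : En n → ℝ) (x : En n) :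
    AEStronglyMeasurable
      (fun z => knear n p ρ z • (fderiv ℝ u x - fderiv ℝ u (x + z))) volume := by
  refine (knear_meas hρ).aestronglyMeasurable.smul ?_
  have h1 : Measurable (fun z => fderiv ℝ u (x + z)) :=
    (measurable_fderiv ℝ u).comp (measurable_const_add x)
  exact (measurable_const.sub h1).aestronglyMeasurable

theorem Nn_hasFDerivAt (hn : 1 ≤ n) (hs : s ∈ Set.Ioo (0:ℝ) 1) (hK : KerB n s K) {ρ A L M : ℝ}
    (hρ : 0 < ρ) (hA : 0 < A) (hL0 : 0 < L) (hM0 : 0 < M) {u : En n → ℝ} (hu : Continuous u)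
    (hM : ∀ x, |u x| ≤ M) (hL : ∀ x y, |u x - u y| ≤ L * ‖x - y‖)
    {x : En n} (hd : ∀ y ∈ ball x (2 * ρ), DifferentiableAt ℝ u y)
    (hH : ∀ y ∈ ball x (2 * ρ), ∀ z ∈ ball x (2 * ρ),
      ‖fderiv ℝ u y - fderiv ℝ u z‖ ≤ A * ‖y - z‖) :
    HasFDerivAt (Nn n ((n : ℝ) + s) ρ u) (Nn' n ((n : ℝ) + s) ρ u x) x := by
  have hp : 0 ≤ (n : ℝ) + s := by have := hs.1; positivity
  have hmeas : ∀ y : En n, AEStronglyMeasurable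
      (fun z => knear n ((n : ℝ) + s) ρ z * (u y - u (y + z))) volume := fun y =>
    (knear_meas hρ).aestronglyMeasurable.mul
      (continuous_const.sub (hu.comp (continuous_const.add continuous_id))).aestronglyMeasurable
  refine hasFDerivAt_integral_of_dominated_of_fderiv_le (μ := volume) (s := ball x ρ)
    (F := fun y z => knear n ((n : ℝ) + s) ρ z * (u y - u (y + z)))
    (F' := fun y z => knear n ((n : ℝ) + s) ρ z • (fderiv ℝ u y - fderiv ℝ u (y + z)))
    (bound := fun z => min (A * ‖z‖) (A * ρ) * ‖z‖ ^ (-((n : ℝ) + s)))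
    (ball_mem_nhds x hρ) (Eventually.of_forall hmeas) ?_ (Nn'_aux_meas hρ u x) ?_
    (hK A (A * ρ) hA (by positivity)).1 ?_
  · refine (ker_bound hK (hmeas x) hL0 (b := 2 * M) (by positivity) ?_).1
    filter_upwards [ae_ne_zero hn] with z hz
    refine near_norm_le hp hρ hz hL0.le (by positivity) (fun _ => ?_) (fun _ => ?_)
    · have := hL x (x + z)
      rwa [sub_add_cancel_left, norm_neg] at this
    · refine (norm_sub_le _ _).trans ?_
      rw [Real.norm_eq_abs, Real.norm_eq_abs]
      linarith [hM x, hM (x + z)]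
  · filter_upwards [ae_ne_zero hn] with z hz y hy
    have key : ‖z‖ < ρ → ‖fderiv ℝ u y - fderiv ℝ u (y + z)‖ ≤ A * ‖z‖ := by
      intro hzρ
      rw [mem_ball, dist_eq_norm] at hy
      have := hH y (by rw [mem_ball, dist_eq_norm]; linarith) (y + z) (by
        rw [mem_ball, dist_eq_norm, add_sub_right_comm]
        linarith [norm_add_le (y - x) z])
      rwa [sub_add_cancel_left, norm_neg] at this
    refine near_norm_le hp hρ hz hA.le (by positivity) key (fun h => (key h).trans ?_)
    gcongr
  · refine Eventually.of_forall fun z y hy => ?_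
    by_cases h : ‖z‖ < ρ
    · rw [mem_ball, dist_eq_norm] at hy
      have h1 := (hd y (by rw [mem_ball, dist_eq_norm]; linarith)).hasFDerivAt
      have h2 := (hd (y + z) (by
        rw [mem_ball, dist_eq_norm, add_sub_right_comm]
        linarith [norm_add_le (y - x) z])).hasFDerivAt
      exact (h1.sub ((hasFDerivAt_comp_add_right z).2 h2)).const_mul _
    · rw [knear_zero (not_lt.1 h)]
      simp only [zero_mul, zero_smul]
      exact hasFDerivAt_const _ _

theorem Nn'_bound (hn : 1 ≤ n) (hs : s ∈ Set.Ioo (0:ℝ) 1) (hK : KerB n s K) {ρ A b : ℝ}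
    (hρ : 0 < ρ) (hA : 0 < A) (hb : 0 < b) {u : En n → ℝ}
    {x : En n} (hH : ∀ y ∈ ball x (2 * ρ), ∀ z ∈ ball x (2 * ρ),
      ‖fderiv ℝ u y - fderiv ℝ u z‖ ≤ A * ‖y - z‖)
    (hb' : ∀ y, ‖fderiv ℝ u x - fderiv ℝ u y‖ ≤ b) :
    Integrable (fun z => knear n ((n : ℝ) + s) ρ z • (fderiv ℝ u x - fderiv ℝ u (x + z))) ∧
    ‖Nn' n ((n : ℝ) + s) ρ u x‖ ≤ K * (A ^ s * b ^ (1 - s)) := by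
  have hp : 0 ≤ (n : ℝ) + s := by have := hs.1; positivity
  refine ker_bound hK (Nn'_aux_meas hρ u x) hA hb ?_
  filter_upwards [ae_ne_zero hn] with z hz
  refine near_norm_le hp hρ hz hA.le hb.le (fun h => ?_) (fun _ => hb' _)
  have := hH x (by rw [mem_ball, dist_self]; linarith) (x + z) (by
    rw [mem_ball, dist_eq_norm, add_sub_cancel_left]; linarith)
  rwa [sub_add_cancel_left, norm_neg] at this

theorem Nn'_diff (hn : 1 ≤ n) (hs : s ∈ Set.Ioo (0:ℝ) 1) (hK : KerB n s K) {ρ A : ℝ}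
    (hρ : 0 < ρ) (hA : 0 < A) {u : En n → ℝ}
    {x y : En n} (hxy : ‖x - y‖ ≤ ρ) (hne : x ≠ y)
    (hH : ∀ y ∈ ball x (2 * ρ), ∀ z ∈ ball x (2 * ρ),
      ‖fderiv ℝ u y - fderiv ℝ u z‖ ≤ A * ‖y - z‖)
    (hx : Integrable (fun z => knear n ((n : ℝ) + s) ρ z • (fderiv ℝ u x - fderiv ℝ u (x + z))))
    (hy : Integrable (fun z => knear n ((n : ℝ) + s) ρ z • (fderiv ℝ u y - fderiv ℝ u (y + z)))) :
    ‖Nn' n ((n : ℝ) + s) ρ u x - Nn' n ((n : ℝ) + s) ρ u y‖ ≤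
      K * (2 * A * ‖x - y‖ ^ (1 - s)) := by
  have hp : 0 ≤ (n : ℝ) + s := by have := hs.1; positivity
  have hr : 0 < ‖x - y‖ := norm_pos_iff.2 (sub_ne_zero.2 hne)
  unfold Nn'
  rw [← integral_sub hx hy]
  have hA2 : 2 * A * ‖x - y‖ ^ (1 - s) = (2 * A) ^ s * (2 * A * ‖x - y‖) ^ (1 - s) := by
    rw [Real.mul_rpow (x := 2 * A) (by positivity) hr.le, ← mul_assoc, ← Real.rpow_add (by positivity)]
    simp
  rw [hA2]
  refine (ker_bound hK (hx.sub hy).aestronglyMeasurable (by positivity) (by positivity) ?_).2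
  filter_upwards [ae_ne_zero hn] with z hz
  rw [Pi.sub_apply, ← smul_sub]
  have hyx : ‖y - x‖ ≤ ρ := by rwa [norm_sub_rev]
  have mx : x ∈ ball x (2 * ρ) := by rw [mem_ball, dist_self]; linarith
  have my : y ∈ ball x (2 * ρ) := by rw [mem_ball, dist_eq_norm]; linarith
  have mxz : ‖z‖ < ρ → x + z ∈ ball x (2 * ρ) := fun h => by
    rw [mem_ball, dist_eq_norm, add_sub_cancel_left]; linarith
  have myz : ‖z‖ < ρ → y + z ∈ ball x (2 * ρ) := fun h => by
    rw [mem_ball, dist_eq_norm, add_sub_right_comm]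
    linarith [norm_add_le (y - x) z]
  refine near_norm_le hp hρ hz (by positivity) (by positivity) (fun h => ?_) (fun h => ?_)
  · have h1 := hH x mx (x + z) (mxz h)
    have h2 := hH y my (y + z) (myz h)
    rw [sub_add_cancel_left, norm_neg] at h1 h2
    refine (norm_sub_le _ _).trans ?_
    linarith
  · have h1 := hH x mx y my
    have h2 := hH (x + z) (mxz h) (y + z) (myz h)
    rw [add_sub_add_right_eq_sub] at h2
    rw [sub_sub_sub_comm]
    refine (norm_sub_le _ _).trans ?_
    linarith

end near

section core

variable {n : ℕ} {s K : ℝ}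

theorem reg_aux {C₀ : ℝ} (hC₀ : 0 < C₀) {Ω : Set (En n)} {u : En n → ℝ} (hΩ : IsOpen Ω)
    (hC2 : ContDiffOn ℝ 2 u Ω)
    (hh : ∀ x ∈ Ω, ‖hess n u x‖ ≤ C₀ * (infDist x (frontier Ω))⁻¹)
    (hv : ∀ x ∈ Ωᶜ, u x = 0) {x : En n} (hx : 0 < infDist x (frontier Ω)) :
    DifferentiableAt ℝ u x ∧ DifferentiableAt ℝ (fderiv ℝ u) x ∧
      ‖fderiv ℝ (fderiv ℝ u) x‖ ≤ C₀ * (infDist x (frontier Ω))⁻¹ := by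
  by_cases hxΩ : x ∈ Ω
  · have h1 : ContDiffAt ℝ 2 u x := (hC2 x hxΩ).contDiffAt (hΩ.mem_nhds hxΩ)
    have h2 : ContDiffAt ℝ 1 (fderiv ℝ u) x := h1.fderiv_right (by norm_num)
    exact ⟨h1.differentiableAt (by norm_num), h2.differentiableAt (by norm_num), hh x hxΩ⟩
  · have h1 : x ∉ closure Ω := by
      intro hc
      have : x ∈ frontier Ω := by
        rw [frontier, hΩ.interior_eq]
        exact ⟨hc, hxΩ⟩
      rw [infDist_zero_of_mem this] at hx
      exact lt_irrefl _ hx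
    have h2 : u =ᶠ[nhds x] fun _ => 0 := by
      filter_upwards [isClosed_closure.isOpen_compl.mem_nhds h1] with y hy
      exact hv y (fun hy' => hy (subset_closure hy'))
    have h3 : fderiv ℝ u =ᶠ[nhds x] fun _ => 0 := by
      have := h2.fderiv (𝕜 := ℝ)
      filter_upwards [this] with y hy
      rw [hy]; simp
    refine ⟨h2.differentiableAt_iff.2 (differentiableAt_const _),
      h3.differentiableAt_iff.2 (differentiableAt_const _), ?_⟩
    rw [h3.fderiv_eq]
    have h4 : fderiv ℝ (fun _ : En n => (0 : En n →L[ℝ] ℝ)) x = 0 := fderiv_const_apply 0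
    rw [h4]
    exact le_of_eq_of_le ContinuousLinearMap.opNorm_zero (by positivity)

theorem reg_ball {C₀ : ℝ} (hC₀ : 0 < C₀) {Ω : Set (En n)} {u : En n → ℝ} (hΩ : IsOpen Ω)
    (hC2 : ContDiffOn ℝ 2 u Ω)
    (hh : ∀ x ∈ Ω, ‖hess n u x‖ ≤ C₀ * (infDist x (frontier Ω))⁻¹)
    (hv : ∀ x ∈ Ωᶜ, u x = 0) {ϱ : ℝ} (hϱ : 0 < ϱ) {x : En n}
    (hx : ϱ ≤ infDist x (frontier Ω)) :
    (∀ y ∈ ball x (2 * (ϱ / 4)), DifferentiableAt ℝ u y) ∧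
    (∀ y ∈ ball x (2 * (ϱ / 4)), ∀ z ∈ ball x (2 * (ϱ / 4)),
      ‖fderiv ℝ u y - fderiv ℝ u z‖ ≤ (2 * C₀ * ϱ⁻¹) * ‖y - z‖) := by
  have hd : ∀ y ∈ ball x (2 * (ϱ / 4)), ϱ / 2 ≤ infDist y (frontier Ω) := by
    intro y hy
    rw [mem_ball, dist_comm] at hy
    have := infDist_le_infDist_add_dist (x := x) (y := y) (s := frontier Ω)
    linarith
  refine ⟨fun y hy => (reg_aux hC₀ hΩ hC2 hh hv (by linarith [hd y hy])).1, ?_⟩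
  intro y hy z hz
  refine (convex_ball x (2 * (ϱ / 4))).norm_image_sub_le_of_norm_fderiv_le (𝕜 := ℝ)
    (f := fderiv ℝ u) (fun w hw => (reg_aux hC₀ hΩ hC2 hh hv (by linarith [hd w hw])).2.1)
    (fun w hw => ?_) hz hy
  refine (reg_aux hC₀ hΩ hC2 hh hv (by linarith [hd w hw])).2.2.trans ?_
  have h1 : (infDist w (frontier Ω))⁻¹ ≤ (ϱ / 2)⁻¹ := inv_anti₀ (by positivity) (hd w hw)
  calc _ ≤ C₀ * (ϱ / 2)⁻¹ := by gcongr
    _ = _ := by field_simp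

theorem u_integrable {Ω : Set (En n)} {u : En n → ℝ} (hΩ : IsBounded Ω) (hu : Continuous u)
    (hv : ∀ x ∈ Ωᶜ, u x = 0) : Integrable u := by
  refine hu.integrable_of_hasCompactSupport
    (HasCompactSupport.of_support_subset_isCompact hΩ.isCompact_closure ?_)
  intro x hx
  by_contra h
  exact hx (hv x (fun h' => h (subset_closure h')))

theorem g_integrand {L M : ℝ} (hK : KerB n s K) (hL0 : 0 < L) (hM0 : 0 < M)
    {u : En n → ℝ} (hu : Continuous u) (hM : ∀ x, |u x| ≤ M)
    (hL : ∀ x y, |u x - u y| ≤ L * ‖x - y‖) (x : En n) :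
    Integrable (fun z => (u x - u (x + z)) / ‖z‖ ^ ((n : ℝ) + s)) ∧
    ‖∫ z, (u x - u (x + z)) / ‖z‖ ^ ((n : ℝ) + s)‖ ≤ K * (L ^ s * (2 * M) ^ (1 - s)) := by
  refine ker_bound hK ?_ hL0 (by positivity) (Eventually.of_forall fun z => ?_)
  · refine Measurable.aestronglyMeasurable ?_
    exact (measurable_const.sub (hu.measurable.comp (measurable_const_add x))).div
      (measurable_norm.pow_const _)
  · rw [norm_div, Real.norm_of_nonneg (Real.rpow_nonneg (norm_nonneg z) _), div_eq_mul_inv,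
      ← Real.rpow_neg (norm_nonneg z)]
    refine min_bound (by positivity) ?_ ?_
    · have := hL x (x + z)
      rwa [sub_add_cancel_left, norm_neg] at this
    · refine (norm_sub_le _ _).trans ?_
      rw [Real.norm_eq_abs, Real.norm_eq_abs]
      linarith [hM x, hM (x + z)]

theorem g_sup {L M : ℝ} (hK : KerB n s K) (hL0 : 0 < L) (hM0 : 0 < M)
    {u : En n → ℝ} (hu : Continuous u) (hM : ∀ x, |u x| ≤ M)
    (hL : ∀ x y, |u x - u y| ≤ L * ‖x - y‖) (x : En n) :
    |fracHalf n s u x| ≤ |cK n (s / 2)| * (K * (L ^ s * (2 * M) ^ (1 - s))) := by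
  unfold fracHalf
  rw [abs_mul]
  exact mul_le_mul_of_nonneg_left (g_integrand hK hL0 hM0 hu hM hL x).2 (abs_nonneg _)

theorem g_holder {L M : ℝ} (hK : KerB n s K) (hL0 : 0 < L) (hM0 : 0 < M)
    {u : En n → ℝ} (hu : Continuous u) (hM : ∀ x, |u x| ≤ M)
    (hL : ∀ x y, |u x - u y| ≤ L * ‖x - y‖) (x y : En n) (hne : x ≠ y) :
    |fracHalf n s u x - fracHalf n s u y| ≤
      |cK n (s / 2)| * (K * (2 * L * ‖x - y‖ ^ (1 - s))) := by
  unfold fracHalf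
  rw [← mul_sub, abs_mul]
  refine mul_le_mul_of_nonneg_left ?_ (abs_nonneg _)
  have hx := (g_integrand hK hL0 hM0 hu hM hL x).1
  have hy := (g_integrand hK hL0 hM0 hu hM hL y).1
  have hr : 0 < ‖x - y‖ := norm_pos_iff.2 (sub_ne_zero.2 hne)
  have hA2 : 2 * L * ‖x - y‖ ^ (1 - s) = (2 * L) ^ s * (2 * L * ‖x - y‖) ^ (1 - s) := by
    rw [Real.mul_rpow (x := 2 * L) (by positivity) hr.le, ← mul_assoc, ← Real.rpow_add (by positivity)]
    simp
  rw [← integral_sub hx hy, hA2]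
  refine (ker_bound hK (hx.sub hy).aestronglyMeasurable (by positivity) (by positivity)
    (Eventually.of_forall fun z => ?_)).2
  rw [Pi.sub_apply, ← sub_div, norm_div, Real.norm_of_nonneg (Real.rpow_nonneg (norm_nonneg z) _),
    div_eq_mul_inv, ← Real.rpow_neg (norm_nonneg z)]
  refine min_bound (by positivity) ?_ ?_
  · have h1 := hL x (x + z)
    have h2 := hL y (y + z)
    rw [sub_add_cancel_left, norm_neg] at h1 h2
    refine (norm_sub_le _ _).trans ?_
    rw [Real.norm_eq_abs, Real.norm_eq_abs]
    linarith
  · have h1 := hL x y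
    have h2 := hL (x + z) (y + z)
    rw [add_sub_add_right_eq_sub] at h2
    rw [sub_sub_sub_comm]
    refine (norm_sub_le _ _).trans ?_
    rw [Real.norm_eq_abs, Real.norm_eq_abs]
    linarith

theorem g_split (hn : 1 ≤ n) (hs : s ∈ Set.Ioo (0:ℝ) 1) {L M ρ : ℝ} (hK : KerB n s K)
    (hL0 : 0 < L) (hM0 : 0 < M) (hρ : 0 < ρ)
    {u : En n → ℝ} (hu : Continuous u) (hM : ∀ x, |u x| ≤ M)
    (hL : ∀ x y, |u x - u y| ≤ L * ‖x - y‖) :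
    fracHalf n s u = fun x => cK n (s / 2) * (Nn n ((n : ℝ) + s) ρ u x +
      (∫ z, kfar n ((n : ℝ) + s) ρ z) * u x - Hfar n ((n : ℝ) + s) ρ u x) := by
  funext x
  unfold fracHalf
  congr 1
  have hk := (kfar_int hn hs hK hρ).1
  have h1 := (g_integrand hK hL0 hM0 hu hM hL x).1
  have h2 : Integrable (fun z => u (x + z) * kfar n ((n : ℝ) + s) ρ z) :=
    Integrable.bdd_mul (c := M) hk (hu.comp (continuous_const.add continuous_id)).aestronglyMeasurable
      (Eventually.of_forall fun w => hM _)
  have h3 : Integrable (fun z => kfar n ((n : ℝ) + s) ρ z * u x) := hk.mul_const _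
  have e : Nn n ((n : ℝ) + s) ρ u x = ∫ z, ((u x - u (x + z)) / ‖z‖ ^ ((n : ℝ) + s) -
      (kfar n ((n : ℝ) + s) ρ z * u x - u (x + z) * kfar n ((n : ℝ) + s) ρ z)) := by
    unfold Nn
    congr 1
    funext z
    unfold knear
    rw [Real.rpow_neg (norm_nonneg z)]
    ring
  have h4 : Integrable (fun z => kfar n ((n : ℝ) + s) ρ z * u x -
      u (x + z) * kfar n ((n : ℝ) + s) ρ z) := h3.sub h2
  rw [e, integral_sub h1 h4, integral_sub h3 h2, integral_mul_const]
  unfold Hfar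
  ring

theorem g_deriv (hn : 1 ≤ n) (hs : s ∈ Set.Ioo (0:ℝ) 1) {L M C₀ : ℝ} (hK : KerB n s K)
    (hK0 : 0 < K) (hC₀ : 0 < C₀)
    (hL0 : 0 < L) (hM0 : 0 < M) {Ω : Set (En n)} {u : En n → ℝ}
    (hΩ : IsOpen Ω) (hΩb : IsBounded Ω) (hu : Continuous u) (hM : ∀ x, |u x| ≤ M)
    (hL : ∀ x y, |u x - u y| ≤ L * ‖x - y‖) (hLip : ∀ x, ‖fderiv ℝ u x‖ ≤ L)
    (hC2 : ContDiffOn ℝ 2 u Ω)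
    (hh : ∀ x ∈ Ω, ‖hess n u x‖ ≤ C₀ * (infDist x (frontier Ω))⁻¹)
    (hv : ∀ x ∈ Ωᶜ, u x = 0) {ϱ : ℝ} (hϱ : 0 < ϱ) :
    (∀ x : En n, ϱ ≤ infDist x (frontier Ω) → DifferentiableAt ℝ (fracHalf n s u) x ∧
      ‖fderiv ℝ (fracHalf n s u) x‖ ≤ |cK n (s / 2)| *
        (K * ((2 * C₀) ^ s * (2 * L) ^ (1 - s) + 2 * 4 ^ s * L)) * (ϱ⁻¹) ^ s) ∧
    (∀ x y : En n, ϱ ≤ infDist x (frontier Ω) → ϱ ≤ infDist y (frontier Ω) →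
      ‖x - y‖ ≤ ϱ / 4 → x ≠ y →
      ‖fderiv ℝ (fracHalf n s u) x - fderiv ℝ (fracHalf n s u) y‖ ≤ |cK n (s / 2)| *
        (K * (6 * C₀ + 4 * L * ((n : ℝ) + s))) * ϱ⁻¹ * ‖x - y‖ ^ (1 - s)) := by
  have hp : 1 ≤ (n : ℝ) + s := by
    have : (1 : ℝ) ≤ n := by exact_mod_cast hn
    linarith [hs.1]
  have hρ : 0 < ϱ / 4 := by positivity
  have hA : 0 < 2 * C₀ * ϱ⁻¹ := by positivity
  obtain ⟨hk, hkI⟩ := kfar_int hn hs hK hρ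
  obtain ⟨hdk, hdkI⟩ := kfar_fderiv_int hn hs hK hρ
  have hui := u_integrable hΩb hu hv
  set κ := ∫ z, kfar n ((n : ℝ) + s) (ϱ / 4) z with hκ
  have hκ0 : 0 ≤ κ := integral_nonneg fun z => kfar_nonneg hρ z
  have hinv : (ϱ / 4)⁻¹ = 4 * ϱ⁻¹ := by rw [inv_div]; ring
  have hq : 0 < ϱ⁻¹ := by positivity
  have hqs : (4 * ϱ⁻¹) ^ s = 4 ^ s * ϱ⁻¹ ^ s := Real.mul_rpow (by norm_num) hq.le
  rw [hinv] at hkI hdkI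
  have hder : ∀ x : En n, ϱ ≤ infDist x (frontier Ω) → HasFDerivAt (fracHalf n s u)
      (cK n (s / 2) • (Nn' n ((n : ℝ) + s) (ϱ / 4) u x + κ • fderiv ℝ u x -
        Hfar' n ((n : ℝ) + s) (ϱ / 4) u x)) x := by
    intro x hx
    obtain ⟨r1, r2⟩ := reg_ball hC₀ hΩ hC2 hh hv hϱ hx
    rw [g_split hn hs hK hL0 hM0 hρ hu hM hL]
    refine HasFDerivAt.const_mul ?_ _
    exact ((Nn_hasFDerivAt hn hs hK hρ hA hL0 hM0 hu hM hL r1 r2).add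
      (((r1 x (mem_ball_self (by positivity))).hasFDerivAt).const_mul κ)).sub
      (Hfar_hasFDerivAt hp hρ hk hu hM hui x)
  have hNb : ∀ x : En n, ϱ ≤ infDist x (frontier Ω) → _ := fun x hx =>
    Nn'_bound hn hs hK hρ hA (b := 2 * L) (by positivity) (u := u) (x := x)
      (reg_ball hC₀ hΩ hC2 hh hv hϱ hx).2
      (fun y => (norm_sub_le _ _).trans (by linarith [hLip x, hLip y]))
  constructor
  · intro x hx
    refine ⟨(hder x hx).differentiableAt, ?_⟩
    rw [(hder x hx).fderiv, norm_smul, Real.norm_eq_abs, mul_assoc]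
    refine mul_le_mul_of_nonneg_left ?_ (abs_nonneg _)
    have b1 := (hNb x hx).2
    rw [Real.mul_rpow (by positivity) hq.le] at b1
    have b2 : ‖κ • fderiv ℝ u x‖ ≤ (K * (4 * ϱ⁻¹) ^ s) * L := by
      rw [norm_smul, Real.norm_of_nonneg hκ0]
      exact mul_le_mul hkI (hLip x) (norm_nonneg _) (by positivity)
    have b3 := Hfar'_bound hp hρ hk hu hM hui hL0.le hL x
    have b4 : L * κ ≤ L * (K * (4 * ϱ⁻¹) ^ s) := by gcongr
    rw [hqs] at b2 b4
    refine (norm_sub_le _ _).trans ?_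
    have b5 := norm_add_le (Nn' n ((n : ℝ) + s) (ϱ / 4) u x) (κ • fderiv ℝ u x)
    calc _ ≤ K * ((2 * C₀) ^ s * ϱ⁻¹ ^ s * (2 * L) ^ (1 - s)) + K * (4 ^ s * ϱ⁻¹ ^ s) * L +
          L * (K * (4 ^ s * ϱ⁻¹ ^ s)) := by linarith
      _ = _ := by ring
  · intro x y hx hy hxy hne
    have hr : 0 < ‖x - y‖ := norm_pos_iff.2 (sub_ne_zero.2 hne)
    rw [(hder x hx).fderiv, (hder y hy).fderiv, ← smul_sub, norm_smul, Real.norm_eq_abs,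
      mul_assoc, mul_assoc]
    refine mul_le_mul_of_nonneg_left ?_ (abs_nonneg _)
    have b1 := Nn'_diff hn hs hK hρ hA hxy hne (reg_ball hC₀ hΩ hC2 hh hv hϱ hx).2
      (hNb x hx).1 (hNb y hy).1
    have b2 := (reg_ball hC₀ hΩ hC2 hh hv hϱ hx).2 x (mem_ball_self (by positivity)) y (by
      rw [mem_ball, dist_comm, dist_eq_norm]; linarith)
    have b3 := Hfar'_lip hdk hu hM hL x y
    have b4 : L * ‖x - y‖ * ∫ z, ‖fderiv ℝ (kfar n ((n : ℝ) + s) (ϱ / 4)) z‖ ≤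
        L * ‖x - y‖ * (((n : ℝ) + s) * (4 * ϱ⁻¹) * (K * (4 * ϱ⁻¹) ^ s)) := by gcongr
    have b5 : ‖κ • fderiv ℝ u x - κ • fderiv ℝ u y‖ ≤
        (K * (4 * ϱ⁻¹) ^ s) * (2 * C₀ * ϱ⁻¹ * ‖x - y‖) := by
      rw [← smul_sub, norm_smul, Real.norm_of_nonneg hκ0]
      exact mul_le_mul hkI b2 (norm_nonneg _) (by positivity)
    have hrr : (4 * ϱ⁻¹) ^ s * ‖x - y‖ ≤ ‖x - y‖ ^ (1 - s) := by
      have h1 : (4 * ϱ⁻¹) ^ s ≤ (‖x - y‖⁻¹) ^ s := by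
        refine Real.rpow_le_rpow (by positivity) ?_ hs.1.le
        rw [← hinv]
        exact inv_anti₀ hr hxy
      calc _ ≤ (‖x - y‖⁻¹) ^ s * ‖x - y‖ := by gcongr
        _ = _ := by
          rw [Real.inv_rpow hr.le, Real.rpow_sub hr, Real.rpow_one, inv_mul_eq_div]
    have e : Nn' n ((n : ℝ) + s) (ϱ / 4) u x + κ • fderiv ℝ u x -
          Hfar' n ((n : ℝ) + s) (ϱ / 4) u x -
        (Nn' n ((n : ℝ) + s) (ϱ / 4) u y + κ • fderiv ℝ u y -
          Hfar' n ((n : ℝ) + s) (ϱ / 4) u y) =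
        (Nn' n ((n : ℝ) + s) (ϱ / 4) u x - Nn' n ((n : ℝ) + s) (ϱ / 4) u y) +
        (κ • fderiv ℝ u x - κ • fderiv ℝ u y) -
        (Hfar' n ((n : ℝ) + s) (ϱ / 4) u x - Hfar' n ((n : ℝ) + s) (ϱ / 4) u y) := by abel
    rw [e]
    refine (norm_sub_le _ _).trans ?_
    have b6 := norm_add_le (Nn' n ((n : ℝ) + s) (ϱ / 4) u x - Nn' n ((n : ℝ) + s) (ϱ / 4) u y)
      (κ • fderiv ℝ u x - κ • fderiv ℝ u y)
    have c1 : (K * (4 * ϱ⁻¹) ^ s) * (2 * C₀ * ϱ⁻¹ * ‖x - y‖) ≤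
        K * (2 * C₀ * ϱ⁻¹) * ‖x - y‖ ^ (1 - s) := by
      calc _ = K * (2 * C₀ * ϱ⁻¹) * ((4 * ϱ⁻¹) ^ s * ‖x - y‖) := by ring
        _ ≤ _ := by gcongr
    have c2 : L * ‖x - y‖ * (((n : ℝ) + s) * (4 * ϱ⁻¹) * (K * (4 * ϱ⁻¹) ^ s)) ≤
        L * (((n : ℝ) + s) * (4 * ϱ⁻¹) * K) * ‖x - y‖ ^ (1 - s) := by
      calc _ = L * (((n : ℝ) + s) * (4 * ϱ⁻¹) * K) * ((4 * ϱ⁻¹) ^ s * ‖x - y‖) := by ring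
        _ ≤ _ := by gcongr
    calc _ ≤ K * (2 * (2 * C₀ * ϱ⁻¹) * ‖x - y‖ ^ (1 - s)) +
          K * (2 * C₀ * ϱ⁻¹) * ‖x - y‖ ^ (1 - s) +
          L * (((n : ℝ) + s) * (4 * ϱ⁻¹) * K) * ‖x - y‖ ^ (1 - s) := by linarith
      _ = _ := by ring

end core

theorem norm_gradient_eq {n : ℕ} (f : En n → ℝ) (x : En n) :
    ‖gradient f x‖ = ‖fderiv ℝ f x‖ := by
  unfold gradient
  exact LinearIsometryEquiv.norm_map _ _

theorem norm_gradient_sub_eq {n : ℕ} (f : En n → ℝ) (x y : En n) :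
    ‖gradient f x - gradient f y‖ = ‖fderiv ℝ f x - fderiv ℝ f y‖ := by
  unfold gradient
  rw [← map_sub]
  exact LinearIsometryEquiv.norm_map _ _

theorem core_bounds (n : ℕ) (hn : 1 ≤ n) (s C₀ M : ℝ) (L : ℝ≥0)
    (hs : s ∈ Set.Ioo (0:ℝ) 1) (hC₀ : 0 < C₀) :
    ∃ C > (0:ℝ), ∀ (Ω : Set (En n)) (u : En n → ℝ),
      IsOpen Ω → IsBounded Ω →
      (∀ x, |u x| ≤ M) → LipschitzWith L u → ContDiffOn ℝ 2 u Ω →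
      (∀ x ∈ Ω, ‖hess n u x‖ ≤ C₀ * (infDist x (frontier Ω))⁻¹) →
      (∀ x, |u x| ≤ C₀ * infDist x Ωᶜ) →
      (∀ x, |fracHalf n s u x| ≤ C) ∧
      (∀ x y, x ≠ y → |fracHalf n s u x - fracHalf n s u y| ≤ C * ‖x - y‖ ^ (1 - s)) ∧
      (∀ ϱ : ℝ, 0 < ϱ → ∀ x : En n, ϱ ≤ infDist x (frontier Ω) →
        DifferentiableAt ℝ (fracHalf n s u) x ∧
        ‖fderiv ℝ (fracHalf n s u) x‖ ≤ C * (ϱ⁻¹) ^ s) ∧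
      (∀ ϱ : ℝ, 0 < ϱ → ∀ x y : En n, ϱ ≤ infDist x (frontier Ω) →
        ϱ ≤ infDist y (frontier Ω) → ‖x - y‖ ≤ ϱ / 4 → x ≠ y →
        ‖fderiv ℝ (fracHalf n s u) x - fderiv ℝ (fracHalf n s u) y‖ ≤
          C * ϱ⁻¹ * ‖x - y‖ ^ (1 - s)) := by
  obtain ⟨K, hK0, hK⟩ := exists_KerB n hn s hs
  have hs0 := hs.1
  set L' : ℝ := L + 1 with hL'
  have hL0 : 0 < L' := by positivity
  set M' : ℝ := |M| + 1 with hM'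
  have hM0 : 0 < M' := by positivity
  set S1 := |cK n (s / 2)| * (K * (L' ^ s * (2 * M') ^ (1 - s))) with hS1
  set S2 := |cK n (s / 2)| * (K * (2 * L')) with hS2
  set S3 := |cK n (s / 2)| *
        (K * ((2 * C₀) ^ s * (2 * L') ^ (1 - s) + 2 * 4 ^ s * L')) with hS3
  set S4 := |cK n (s / 2)| * (K * (6 * C₀ + 4 * L' * ((n : ℝ) + s))) with hS4
  have p1 : 0 ≤ S1 := by positivity
  have p2 : 0 ≤ S2 := by positivity
  have p3 : 0 ≤ S3 := by positivity
  have p4 : 0 ≤ S4 := by positivity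
  refine ⟨S1 + S2 + S3 + S4 + 1, by positivity, ?_⟩
  intro Ω u hΩ hΩb hM hL hC2 hh hd
  have hu := hL.continuous
  have hMb : ∀ x, |u x| ≤ M' := fun x => (hM x).trans (by linarith [le_abs_self M])
  have hLb : ∀ x y, |u x - u y| ≤ L' * ‖x - y‖ := by
    intro x y
    have := hL.dist_le_mul x y
    rw [Real.dist_eq, dist_eq_norm] at this
    nlinarith [norm_nonneg (x - y)]
  have hLip : ∀ x, ‖fderiv ℝ u x‖ ≤ L' := fun x =>
    (norm_fderiv_le_of_lipschitz ℝ hL).trans (by linarith)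
  have hv : ∀ x ∈ Ωᶜ, u x = 0 := by
    intro x hx
    have := hd x
    rw [infDist_zero_of_mem hx, mul_zero] at this
    exact abs_nonpos_iff.1 this
  refine ⟨fun x => ?_, fun x y hne => ?_, fun ϱ hϱ x hx => ?_, fun ϱ hϱ x y hx hy hxy hne => ?_⟩
  · exact (g_sup hK hL0 hM0 hu hMb hLb x).trans (by linarith)
  · refine (g_holder hK hL0 hM0 hu hMb hLb x y hne).trans ?_
    calc _ = S2 * ‖x - y‖ ^ (1 - s) := by rw [hS2]; ring
      _ ≤ _ := by
        gcongr
        linarith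
  · obtain ⟨h1, h2⟩ := (g_deriv hn hs hK hK0 hC₀ hL0 hM0 hΩ hΩb hu hMb hLb hLip hC2 hh hv hϱ).1 x hx
    refine ⟨h1, h2.trans ?_⟩
    rw [← hS3]
    gcongr
    linarith
  · refine ((g_deriv hn hs hK hK0 hC₀ hL0 hM0 hΩ hΩb hu hMb hLb hLip hC2 hh hv hϱ).2
      x y hx hy hxy hne).trans ?_
    rw [← hS4]
    gcongr
    linarith

/-- Lemma 2.3(ii): `‖𝔤‖_{C^β(Ω̆_ϱ)} ≤ C ϱ^{1-s-β}` for
`β ∈ [1-s, 2-s]`, `ϱ ∈ (0,1)`, where `Ω̆_ϱ = {dist(·,∂Ω) ≥ ϱ}`. The `C^β` norm is the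
Hölder norm for `β ≤ 1`, and for `β > 1` it also comprises `sup|∇𝔤|` and the
`(β-1)`-Hölder seminorm of `∇𝔤`. -/
theorem fracHalf_holder_interior (n : ℕ) (hn : 1 ≤ n) (s C₀ M : ℝ) (L : ℝ≥0)
    (hs : s ∈ Set.Ioo (0:ℝ) 1) (hC₀ : 0 < C₀) :
    ∃ C > (0:ℝ), ∀ (Ω : Set (En n)) (u : En n → ℝ),
      IsOpen Ω → IsBounded Ω →
      (∀ x, |u x| ≤ M) → LipschitzWith L u → ContDiffOn ℝ 2 u Ω →
      (∀ x ∈ Ω, ‖hess n u x‖ ≤ C₀ * (infDist x (frontier Ω))⁻¹) →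
      (∀ x, |u x| ≤ C₀ * infDist x Ωᶜ) →
      ∀ β ∈ Set.Icc (1 - s) (2 - s), ∀ ϱ ∈ Set.Ioo (0:ℝ) 1,
        (β ≤ 1 →
          (∀ x : En n, ϱ ≤ infDist x (frontier Ω) →
            |fracHalf n s u x| ≤ C * ϱ ^ (1 - s - β)) ∧
          (∀ x y : En n, ϱ ≤ infDist x (frontier Ω) → ϱ ≤ infDist y (frontier Ω) →
            |fracHalf n s u x - fracHalf n s u y| ≤ C * ϱ ^ (1 - s - β) * ‖x - y‖ ^ β)) ∧
        (1 < β →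
          (∀ x : En n, ϱ ≤ infDist x (frontier Ω) →
            |fracHalf n s u x| ≤ C * ϱ ^ (1 - s - β)) ∧
          (∀ x : En n, ϱ ≤ infDist x (frontier Ω) →
            ‖gradient (fracHalf n s u) x‖ ≤ C * ϱ ^ (1 - s - β)) ∧
          (∀ x y : En n, ϱ ≤ infDist x (frontier Ω) → ϱ ≤ infDist y (frontier Ω) →
            ‖gradient (fracHalf n s u) x - gradient (fracHalf n s u) y‖
              ≤ C * ϱ ^ (1 - s - β) * ‖x - y‖ ^ (β - 1))) := by
  obtain ⟨C1, hC1, h1⟩ := core_bounds n hn s C₀ M L hs hC₀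
  refine ⟨8 * C1, by positivity, ?_⟩
  intro Ω u hΩ hΩb hM hL hC2 hh hd β hβ ϱ hϱ
  obtain ⟨ha, hb, hc, hd'⟩ := h1 Ω u hΩ hΩb hM hL hC2 hh hd
  obtain ⟨hs0, hs1⟩ := hs
  obtain ⟨hβ0, hβ1⟩ := hβ
  obtain ⟨hϱ0, hϱ1⟩ := hϱ
  have hpow1 : 1 ≤ ϱ ^ (1 - s - β) :=
    Real.one_le_rpow_of_pos_of_le_one_of_nonpos hϱ0 hϱ1.le (by linarith)
  have hP : 0 < ϱ ^ (1 - s - β) := by positivity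
  have hsup : ∀ x : En n, ϱ ≤ infDist x (frontier Ω) →
      |fracHalf n s u x| ≤ 8 * C1 * ϱ ^ (1 - s - β) := by
    intro x _
    refine (ha x).trans ?_
    nlinarith
  refine ⟨fun hβ' => ⟨hsup, ?_⟩, fun hβ' => ⟨hsup, ?_, ?_⟩⟩
  · intro x y hx hy
    by_cases hne : x = y
    · subst hne
      rw [sub_self, abs_zero]
      positivity
    have hr : 0 < ‖x - y‖ := norm_pos_iff.2 (sub_ne_zero.2 hne)
    rcases le_or_gt (ϱ / 4) ‖x - y‖ with h | h
    · refine (hb x y hne).trans ?_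
      have e1 : ‖x - y‖ ^ (1 - s) = ‖x - y‖ ^ (1 - s - β) * ‖x - y‖ ^ β := by
        rw [← Real.rpow_add hr]; congr 1; ring
      have e2 : ‖x - y‖ ^ (1 - s - β) ≤ (ϱ / 4) ^ (1 - s - β) :=
        Real.rpow_le_rpow_of_nonpos (by positivity) h (by linarith)
      have e3 : (ϱ / 4) ^ (1 - s - β) ≤ 4 * ϱ ^ (1 - s - β) := by
        rw [div_eq_mul_inv, Real.mul_rpow hϱ0.le (by norm_num), mul_comm,
          Real.inv_rpow (by norm_num), ← Real.rpow_neg (by norm_num)]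
        refine mul_le_mul_of_nonneg_right ?_ hP.le
        calc (4:ℝ) ^ (-(1 - s - β)) ≤ 4 ^ (1:ℝ) :=
              Real.rpow_le_rpow_of_exponent_le (by norm_num) (by linarith)
          _ = 4 := Real.rpow_one 4
      rw [e1]
      calc C1 * (‖x - y‖ ^ (1 - s - β) * ‖x - y‖ ^ β)
          ≤ C1 * ((4 * ϱ ^ (1 - s - β)) * ‖x - y‖ ^ β) := by
            gcongr
            exact e2.trans e3
        _ ≤ 8 * C1 * ϱ ^ (1 - s - β) * ‖x - y‖ ^ β := by
            have : 0 ≤ C1 * ϱ ^ (1 - s - β) * ‖x - y‖ ^ β := by positivity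
            nlinarith
    · have hin : ∀ w ∈ ball x (ϱ / 2), ϱ / 2 ≤ infDist w (frontier Ω) := by
        intro w hw
        rw [mem_ball, dist_comm] at hw
        have := infDist_le_infDist_add_dist (x := x) (y := w) (s := frontier Ω)
        linarith
      have hmv := (convex_ball x (ϱ / 2)).norm_image_sub_le_of_norm_fderiv_le (𝕜 := ℝ)
        (f := fracHalf n s u) (C := C1 * ((ϱ / 2)⁻¹) ^ s) (x := y) (y := x)
        (fun w hw => (hc (ϱ / 2) (by positivity) w (hin w hw)).1)
        (fun w hw => (hc (ϱ / 2) (by positivity) w (hin w hw)).2)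
        (by rw [mem_ball, dist_comm, dist_eq_norm]; linarith)
        (mem_ball_self (by positivity))
      refine hmv.trans ?_
      have e1 : ((ϱ / 2)⁻¹) ^ s ≤ 2 * ϱ ^ (-s) := by
        rw [inv_div, Real.div_rpow (by norm_num) hϱ0.le, Real.rpow_neg hϱ0.le, div_eq_mul_inv]
        refine mul_le_mul_of_nonneg_right ?_ (by positivity)
        calc (2:ℝ) ^ s ≤ 2 ^ (1:ℝ) :=
              Real.rpow_le_rpow_of_exponent_le (by norm_num) (by linarith)
          _ = 2 := Real.rpow_one 2
      have e2 : ‖x - y‖ = ‖x - y‖ ^ (1 - β) * ‖x - y‖ ^ β := by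
        rw [← Real.rpow_add hr]; simp
      have e3 : ‖x - y‖ ^ (1 - β) ≤ ϱ ^ (1 - β) :=
        Real.rpow_le_rpow hr.le (by linarith) (by linarith)
      have e4 : ϱ ^ (-s) * ϱ ^ (1 - β) = ϱ ^ (1 - s - β) := by
        rw [← Real.rpow_add hϱ0]; congr 1; ring
      calc C1 * ((ϱ / 2)⁻¹) ^ s * ‖x - y‖
          = C1 * ((ϱ / 2)⁻¹) ^ s * (‖x - y‖ ^ (1 - β) * ‖x - y‖ ^ β) := by rw [← e2]
        _ ≤ C1 * (2 * ϱ ^ (-s)) * (ϱ ^ (1 - β) * ‖x - y‖ ^ β) := by gcongr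
        _ = 2 * C1 * (ϱ ^ (-s) * ϱ ^ (1 - β)) * ‖x - y‖ ^ β := by ring
        _ = 2 * C1 * ϱ ^ (1 - s - β) * ‖x - y‖ ^ β := by rw [e4]
        _ ≤ 8 * C1 * ϱ ^ (1 - s - β) * ‖x - y‖ ^ β := by
            have : 0 ≤ C1 * ϱ ^ (1 - s - β) * ‖x - y‖ ^ β := by positivity
            nlinarith
  · intro x hx
    rw [norm_gradient_eq]
    refine (hc ϱ hϱ0 x hx).2.trans ?_
    rw [Real.inv_rpow hϱ0.le, ← Real.rpow_neg hϱ0.le]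
    have e1 : ϱ ^ (-s) ≤ ϱ ^ (1 - s - β) :=
      Real.rpow_le_rpow_of_exponent_ge hϱ0 hϱ1.le (by linarith)
    have : 0 < ϱ ^ (-s) := by positivity
    nlinarith
  · intro x y hx hy
    rw [norm_gradient_sub_eq]
    by_cases hne : x = y
    · subst hne
      rw [sub_self, norm_zero]
      positivity
    have hr : 0 < ‖x - y‖ := norm_pos_iff.2 (sub_ne_zero.2 hne)
    rcases le_or_gt (ϱ / 4) ‖x - y‖ with h | h
    · have h1 := (hc ϱ hϱ0 x hx).2
      have h2 := (hc ϱ hϱ0 y hy).2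
      rw [Real.inv_rpow hϱ0.le, ← Real.rpow_neg hϱ0.le] at h1 h2
      have e4 : ϱ ^ (-s) = ϱ ^ (1 - s - β) * ϱ ^ (β - 1) := by
        rw [← Real.rpow_add hϱ0]; congr 1; ring
      have e5 : ϱ ^ (β - 1) ≤ 4 * ‖x - y‖ ^ (β - 1) := by
        calc ϱ ^ (β - 1) ≤ (4 * ‖x - y‖) ^ (β - 1) :=
              Real.rpow_le_rpow hϱ0.le (by linarith) (by linarith)
          _ = 4 ^ (β - 1) * ‖x - y‖ ^ (β - 1) := Real.mul_rpow (by norm_num) hr.le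
          _ ≤ 4 * ‖x - y‖ ^ (β - 1) := by
              refine mul_le_mul_of_nonneg_right ?_ (by positivity)
              calc (4:ℝ) ^ (β - 1) ≤ 4 ^ (1:ℝ) :=
                    Real.rpow_le_rpow_of_exponent_le (by norm_num) (by linarith)
                _ = 4 := Real.rpow_one 4
      refine (norm_sub_le _ _).trans ?_
      calc _ ≤ 2 * C1 * ϱ ^ (-s) := by linarith
        _ = 2 * C1 * ϱ ^ (1 - s - β) * ϱ ^ (β - 1) := by rw [e4]; ring
        _ ≤ 2 * C1 * ϱ ^ (1 - s - β) * (4 * ‖x - y‖ ^ (β - 1)) := by gcongr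
        _ = _ := by ring
    · refine (hd' ϱ hϱ0 x y hx hy h.le hne).trans ?_
      have e1 : ‖x - y‖ ^ (1 - s) = ‖x - y‖ ^ (2 - s - β) * ‖x - y‖ ^ (β - 1) := by
        rw [← Real.rpow_add hr]; congr 1; ring
      have e2 : ‖x - y‖ ^ (2 - s - β) ≤ ϱ ^ (2 - s - β) :=
        Real.rpow_le_rpow hr.le (by linarith) (by linarith)
      have e3 : ϱ⁻¹ * ϱ ^ (2 - s - β) = ϱ ^ (1 - s - β) := by
        rw [← Real.rpow_neg_one, ← Real.rpow_add hϱ0]; congr 1; ring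
      rw [e1]
      calc C1 * ϱ⁻¹ * (‖x - y‖ ^ (2 - s - β) * ‖x - y‖ ^ (β - 1))
          ≤ C1 * ϱ⁻¹ * (ϱ ^ (2 - s - β) * ‖x - y‖ ^ (β - 1)) := by gcongr
        _ = C1 * (ϱ⁻¹ * ϱ ^ (2 - s - β)) * ‖x - y‖ ^ (β - 1) := by ring
        _ = C1 * ϱ ^ (1 - s - β) * ‖x - y‖ ^ (β - 1) := by rw [e3]
        _ ≤ 8 * C1 * ϱ ^ (1 - s - β) * ‖x - y‖ ^ (β - 1) := by
            have : 0 ≤ C1 * ϱ ^ (1 - s - β) * ‖x - y‖ ^ (β - 1) := by positivity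
            nlinarith
end
end

section
/- Let n ≥ 1, s ∈ (0,1), and let Ω ⊂ ℝⁿ be a bounded C² domain that is strictly star-shaped with respect to the origin. Let u ∈ C²(Ω) ∩ C¹(cl Ω) ∩ C^{0,1}(ℝⁿ) with u = 0 in Ωᶜ satisfy condition (★). Then ∫_Ω (x·∇u(x)) (−Δ)ˢu(x) dx = ((2s−n)/2) ∫_Ω u(x)(−Δ)ˢu(x) dx = ((2s−n)/2) [u]_s². -/
open MeasureTheory Real Set Metric Bornology Filter
open scoped RealInnerProductSpace ENNReal NNReal Pointwise

noncomputable section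

theorem C2Domain.isOpen_carrier {n : ℕ} (D : C2Domain n) : IsOpen D.carrier := by
  rw [D.carrier_eq]
  exact isOpen_lt D.phi_smooth.continuous continuous_const

theorem C2Domain.phi_frontier {n : ℕ} (D : C2Domain n) {x : En n} (hx : x ∈ frontier D.carrier) :
    D.phi x = 0 := by
  rw [D.carrier_eq] at hx
  exact frontier_lt_subset_eq D.phi_smooth.continuous continuous_const hx

theorem C2Domain.isCompact_frontier {n : ℕ} (D : C2Domain n) : IsCompact (frontier D.carrier) :=
  isCompact_of_isClosed_isBounded isClosed_frontier
    (D.bounded.closure.subset frontier_subset_closure)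

theorem C2Domain.frontier_nonempty {n : ℕ} (hn : 1 ≤ n) (D : C2Domain n) :
    (frontier D.carrier).Nonempty := by
  by_contra h
  rw [Set.not_nonempty_iff_eq_empty, frontier_eq_empty_iff] at h
  rcases h with h | h
  · exact D.connected.nonempty.ne_empty h
  · have : Nonempty (Fin n) := ⟨⟨0, hn⟩⟩
    have := D.bounded
    rw [h] at this
    exact (NormedSpace.unbounded_univ ℝ (En n)) this

theorem C2Domain.fderiv_pos {n : ℕ} (D : C2Domain n) (hD : D.StrictlyStarShapedAt 0)
    {x : En n} (hx : x ∈ frontier D.carrier) : 0 < fderiv ℝ D.phi x x := by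
  have h := hD.2 x hx
  have hg : 0 < ‖gradient D.phi x‖ := norm_pos_iff.2 (D.grad_ne x hx)
  rw [sub_zero, C2Domain.nu, real_inner_smul_right, real_inner_comm, inner_gradient_left] at h
  exact (mul_pos_iff_of_pos_left (inv_pos.2 hg)).1 h

theorem ray_growth {n : ℕ} (hn : 1 ≤ n) (D : C2Domain n) (hD : D.StrictlyStarShapedAt 0) :
    ∃ c > 0, ∃ t₀ > 0, t₀ ≤ 1 ∧ ∀ p ∈ frontier D.carrier, ∀ t ∈ Icc (0:ℝ) t₀,
      c * t ≤ D.phi ((1 + t) • p) := by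
  have hφ1 : ContDiff ℝ 1 D.phi := D.phi_smooth.of_le (by norm_num)
  have hcd : Continuous (fderiv ℝ D.phi) := hφ1.continuous_fderiv (by norm_num)
  have hdiff : Differentiable ℝ D.phi := hφ1.differentiable (by norm_num)
  obtain ⟨p₀, hp₀, hmin⟩ := D.isCompact_frontier.exists_isMinOn (D.frontier_nonempty hn)
    (f := fun x => fderiv ℝ D.phi x x) (by fun_prop)
  set m := fderiv ℝ D.phi p₀ p₀ with hm
  have hmpos : 0 < m := D.fderiv_pos hD hp₀
  have hev : ∀ᶠ t in nhds (0:ℝ), ∀ p ∈ frontier D.carrier,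
      m / 2 < fderiv ℝ D.phi ((1 + t) • p) p := by
    apply D.isCompact_frontier.eventually_forall_of_forall_eventually
    intro p hp
    have hcont : Continuous (fun z : ℝ × En n => fderiv ℝ D.phi ((1 + z.1) • z.2) z.2) := by
      fun_prop
    apply hcont.continuousAt.eventually_const_lt
    have : m ≤ fderiv ℝ D.phi p p := hmin hp
    simp only [add_zero, one_smul]
    linarith
  obtain ⟨ε, hε, hball⟩ := Metric.eventually_nhds_iff.1 hev
  refine ⟨m / 2, by positivity, min (ε / 2) 1, by positivity, min_le_right _ _, ?_⟩
  intro p hp t ht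
  have hder : ∀ τ : ℝ, HasDerivAt (fun τ : ℝ => D.phi ((1 + τ) • p))
      (fderiv ℝ D.phi ((1 + τ) • p) p) τ := by
    intro τ
    have h1 : HasDerivAt (fun τ : ℝ => (1 + τ) • p) p τ := by
      simpa using ((hasDerivAt_id τ).const_add 1).smul_const p
    exact (hdiff _).hasFDerivAt.comp_hasDerivAt τ h1
  have := (convex_Icc (0:ℝ) (min (ε / 2) 1)).mul_sub_le_image_sub_of_le_deriv
    (f := fun τ : ℝ => D.phi ((1 + τ) • p))
    (fun τ _ => (hder τ).continuousAt.continuousWithinAt)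
    (fun τ _ => (hder τ).differentiableAt.differentiableWithinAt) (C := m / 2)
    (by
      intro τ hτ
      rw [(hder τ).deriv]
      have hτ' := interior_subset hτ
      refine (hball ?_ p hp).le
      rw [Real.dist_eq, sub_zero, abs_of_nonneg hτ'.1]
      have := hτ'.2.trans (min_le_left _ _)
      linarith) 0 ⟨le_rfl, by positivity⟩ t ht ht.1
  simpa [D.phi_frontier hp] using this

theorem two_point {n : ℕ} (hn : 1 ≤ n) (D : C2Domain n) (hD : D.StrictlyStarShapedAt 0) :
    ∃ c > 0, ∃ t₀ > 0, t₀ ≤ 1 ∧ ∀ x : En n, ∀ t ∈ Icc (0:ℝ) t₀,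
      c * t ≤ infDist x (frontier D.carrier) + infDist ((1 + t) • x) (frontier D.carrier) := by
  obtain ⟨c, hc, t₀, ht₀, ht₁, hray⟩ := ray_growth hn D hD
  have hφ1 : ContDiff ℝ 1 D.phi := D.phi_smooth.of_le (by norm_num)
  have hcd : Continuous (fderiv ℝ D.phi) := hφ1.continuous_fderiv (by norm_num)
  have hdiff : Differentiable ℝ D.phi := hφ1.differentiable (by norm_num)
  obtain ⟨R, hR⟩ := D.isCompact_frontier.isBounded.subset_closedBall 0
  obtain ⟨M, hM⟩ := (isCompact_closedBall (0 : En n) (2 * R)).exists_bound_of_continuousOn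
    hcd.continuousOn
  have hlip : ∀ x ∈ closedBall (0 : En n) (2 * R), ∀ y ∈ closedBall (0 : En n) (2 * R),
      |D.phi y - D.phi x| ≤ M * ‖y - x‖ := fun x hx y hy =>
    (convex_closedBall _ _).norm_image_sub_le_of_norm_fderiv_le (fun z _ => hdiff z) hM hx hy
  set M' := max M 1
  have hM' : 0 < M' := by positivity
  refine ⟨c / (2 * M'), by positivity, t₀, ht₀, ht₁, ?_⟩
  intro x t ht
  obtain ⟨p, hp, hpd⟩ := D.isCompact_frontier.exists_infDist_eq_dist (D.frontier_nonempty hn) x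
  obtain ⟨q, hq, hqd⟩ := D.isCompact_frontier.exists_infDist_eq_dist (D.frontier_nonempty hn)
    ((1 + t) • x)
  have hpR : ‖p‖ ≤ R := by simpa using hR hp
  have hqR : ‖q‖ ≤ R := by simpa using hR hq
  have hR0 : 0 ≤ R := (norm_nonneg p).trans hpR
  have h1t : 1 + t ≤ 2 := by linarith [ht.2]
  have h1t0 : 0 ≤ 1 + t := by linarith [ht.1]
  have h1 := hray p hp t ht
  have h2 := hlip q (by simp; linarith) ((1 + t) • p) (by
    simp only [mem_closedBall, dist_zero_right, norm_smul, Real.norm_eq_abs, abs_of_nonneg h1t0]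
    gcongr)
  rw [D.phi_frontier hq, sub_zero] at h2
  have h3 : ‖(1 + t) • p - q‖ ≤ 2 * dist x p + dist ((1 + t) • x) q := by
    have : (1 + t) • p - q = (1 + t) • (p - x) + ((1 + t) • x - q) := by
      rw [smul_sub]; abel
    rw [this]
    refine (norm_add_le _ _).trans ?_
    rw [norm_smul, Real.norm_eq_abs, abs_of_nonneg h1t0, dist_comm x p, dist_eq_norm, dist_eq_norm]
    gcongr
  rw [hpd, hqd]
  have h4 : c * t ≤ M' * (2 * dist x p + dist ((1 + t) • x) q) := by
    calc c * t ≤ _ := h1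
      _ ≤ _ := le_abs_self _
      _ ≤ _ := h2
      _ ≤ M' * ‖(1 + t) • p - q‖ := by gcongr; exact le_max_left _ _
      _ ≤ _ := by gcongr
  have h5 : M' * (2 * dist x p + dist ((1 + t) • x) q)
      ≤ M' * (2 * (dist x p + dist ((1 + t) • x) q)) := by
    gcongr; linarith [dist_nonneg (x := (1 + t) • x) (y := q)]
  rw [div_mul_eq_mul_div, div_le_iff₀ (by positivity)]
  linarith

theorem lint_one {c β : ℝ} (hc : 0 < c) (hβ : β < 1) :
    ∫⁻ r in ball (0:ℝ) 2, (ENNReal.ofReal (c * |r|)) ^ (-β) < ⊤ := by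
  have h1 : IntegrableOn (fun r : ℝ => (c * ‖r‖) ^ (-β)) (ball (0:ℝ) 2) := by
    rw [integrableOn_fun_norm_addHaar (volume : Measure ℝ) (f := fun r : ℝ => (c * r) ^ (-β))]
    have h2 : IntegrableOn (fun r : ℝ => c ^ (-β) * r ^ (-β)) (Ioo 0 2) :=
      ((intervalIntegral.integrableOn_Ioo_rpow_iff (by norm_num)).2 (by linarith)).const_mul _
    refine h2.congr_fun (fun r hr => ?_) measurableSet_Ioo
    simp [Real.mul_rpow hc.le hr.1.le]
  have h3 := h1.hasFiniteIntegral
  rw [hasFiniteIntegral_iff_ofReal (Eventually.of_forall fun r => by positivity)] at h3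
  refine lt_of_le_of_lt (lintegral_mono_ae ?_) h3
  have : ∀ᵐ r : ℝ ∂(volume.restrict (ball (0:ℝ) 2)), r ≠ 0 :=
    ae_restrict_of_ae (Measure.ae_ne volume 0)
  filter_upwards [this] with r hr
  have : 0 < c * |r| := by positivity
  rw [ENNReal.ofReal_rpow_of_pos this, Real.norm_eq_abs]

theorem lint_ray {n : ℕ} (hn : 1 ≤ n) (D : C2Domain n) (hD : D.StrictlyStarShapedAt 0)
    {β : ℝ} (hβ0 : 0 < β) (hβ : β < 1) :
    ∃ t₀ > 0, t₀ ≤ 1 ∧ ∃ C : ℝ≥0∞, C < ⊤ ∧ ∀ x : En n, ∫⁻ τ in Icc (1:ℝ) (1 + t₀),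
      (ENNReal.ofReal (infDist (τ • x) (frontier D.carrier))) ^ (-β) ≤ C := by
  obtain ⟨c, hc, t₀, ht₀, ht₁, htp⟩ := two_point hn D hD
  refine ⟨t₀, ht₀, ht₁, _, lint_one (c := c / 4) (by positivity) hβ, fun x => ?_⟩
  set d : ℝ → ℝ := fun τ => infDist (τ • x) (frontier D.carrier) with hd
  have hdc : Continuous d := by
    simp only [hd]
    exact (continuous_infDist_pt _).comp (by fun_prop)
  obtain ⟨τ₀, hτ₀, hmin⟩ := (isCompact_Icc (a := (1:ℝ)) (b := 1 + t₀)).exists_isMinOn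
    ⟨1, le_rfl, by linarith⟩ hdc.continuousOn
  have key : ∀ a ∈ Icc (1:ℝ) (1 + t₀), ∀ b ∈ Icc (1:ℝ) (1 + t₀), a ≤ b →
      c / 2 * (b - a) ≤ d a + d b := by
    intro a ha b hb hab
    have ha0 : 0 < a := by linarith [ha.1]
    have ht : (b - a) / a ∈ Icc 0 t₀ := by
      constructor
      · apply div_nonneg <;> linarith
      · rw [div_le_iff₀ ha0]
        nlinarith [ha.1, hb.2]
    have := htp (a • x) ((b - a) / a) ht
    rw [smul_smul] at this
    have e : (1 + (b - a) / a) * a = b := by field_simp; ring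
    rw [e] at this
    refine le_trans ?_ this
    have : (b - a) / 2 ≤ (b - a) / a := by
      apply div_le_div_of_nonneg_left <;> linarith [ha.2]
    nlinarith
  have key2 : ∀ τ ∈ Icc (1:ℝ) (1 + t₀), c / 4 * |τ - τ₀| ≤ d τ := by
    intro τ hτ
    have hm : d τ₀ ≤ d τ := hmin hτ
    rcases le_total τ τ₀ with h | h
    · have := key τ hτ τ₀ hτ₀ h
      rw [abs_of_nonpos (by linarith)]; linarith
    · have := key τ₀ hτ₀ τ hτ h
      rw [abs_of_nonneg (by linarith)]; linarith
  calc ∫⁻ τ in Icc (1:ℝ) (1 + t₀), (ENNReal.ofReal (d τ)) ^ (-β)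
      ≤ ∫⁻ τ in Icc (1:ℝ) (1 + t₀), (ENNReal.ofReal (c / 4 * |τ - τ₀|)) ^ (-β) := by
        refine setLIntegral_mono' measurableSet_Icc fun τ hτ => ?_
        rw [ENNReal.rpow_neg, ENNReal.rpow_neg]
        gcongr
        exact key2 τ hτ
    _ ≤ ∫⁻ τ in (fun τ => τ - τ₀) ⁻¹' (ball (0:ℝ) 2),
          (ENNReal.ofReal (c / 4 * |τ - τ₀|)) ^ (-β) := by
        apply lintegral_mono_set
        intro τ hτ
        simp only [mem_preimage, mem_ball, dist_zero_right, Real.norm_eq_abs, abs_lt]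
        constructor <;> linarith [hτ.1, hτ.2, hτ₀.1, hτ₀.2]
    _ = ∫⁻ r in ball (0:ℝ) 2, (ENNReal.ofReal (c / 4 * |r|)) ^ (-β) := by
        have hmp := measurePreserving_sub_right (volume : Measure ℝ) τ₀
        exact hmp.setLIntegral_comp_preimage measurableSet_ball
          (f := fun r => (ENNReal.ofReal (c / 4 * |r|)) ^ (-β)) (by fun_prop)

theorem lint_dist {n : ℕ} (hn : 1 ≤ n) (D : C2Domain n) (hD : D.StrictlyStarShapedAt 0)
    {β : ℝ} (hβ0 : 0 < β) (hβ : β < 1) (ρ : ℝ) :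
    ∫⁻ x in ball (0 : En n) ρ,
      (ENNReal.ofReal (infDist x (frontier D.carrier))) ^ (-β) < ⊤ := by
  obtain ⟨t₀, ht₀, ht₁, C, hC, hray⟩ := lint_ray hn D hD hβ0 hβ
  set G : En n → ℝ≥0∞ := fun x => (ENNReal.ofReal (infDist x (frontier D.carrier))) ^ (-β) with hG
  have hGm : Measurable G := by
    have : Continuous fun x : En n => infDist x (frontier D.carrier) := continuous_infDist_pt _
    simp only [hG]
    exact (this.measurable.ennreal_ofReal).pow_const _
  have h1 : ∫⁻ x in ball (0 : En n) ρ, ∫⁻ τ in Icc (1:ℝ) (1 + t₀), G (τ • x) < ⊤ := by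
    refine lt_of_le_of_lt (lintegral_mono (g := fun _ => C) fun x => hray x) ?_
    rw [lintegral_const]
    apply ENNReal.mul_lt_top hC
    rw [Measure.restrict_apply_univ]
    exact measure_ball_lt_top
  rw [lintegral_lintegral_swap (by
    apply Measurable.aemeasurable
    exact hGm.comp (by fun_prop : Measurable fun p : En n × ℝ => p.2 • p.1))] at h1
  set A := ∫⁻ x in ball (0 : En n) ρ, G x with hA
  have h2 : ∀ τ ∈ Icc (1:ℝ) (1 + t₀), ENNReal.ofReal ((2 ^ n)⁻¹) * A ≤
      ∫⁻ x in ball (0 : En n) ρ, G (τ • x) := by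
    intro τ hτ
    have hτ0 : 0 < τ := by linarith [hτ.1]
    have hme : MeasurableEmbedding (fun x : En n => τ • x) :=
      (Homeomorph.smulOfNeZero τ hτ0.ne').measurableEmbedding
    have e1 : ∫⁻ x in (fun x : En n => τ • x) ⁻¹' (ball (0 : En n) ρ), G (τ • x)
        = ENNReal.ofReal |(τ ^ n)⁻¹| * A := by
      rw [← setLIntegral_map measurableSet_ball hGm hme.measurable,
        Measure.map_addHaar_smul _ hτ0.ne', Measure.restrict_smul, lintegral_smul_measure]
      simp [hA]
    calc ENNReal.ofReal ((2 ^ n)⁻¹) * A ≤ ENNReal.ofReal |(τ ^ n)⁻¹| * A := by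
          gcongr
          rw [abs_of_nonneg (by positivity)]
          gcongr
          linarith [hτ.2]
      _ = _ := e1.symm
      _ ≤ _ := by
          apply lintegral_mono_set
          intro x hx
          simp only [mem_preimage, mem_ball, dist_zero_right, norm_smul, Real.norm_eq_abs,
            abs_of_pos hτ0] at hx ⊢
          nlinarith [norm_nonneg x, hτ.1]
  have h3 := setLIntegral_mono' (μ := volume) measurableSet_Icc h2
  have h4 := lt_of_le_of_lt h3 h1
  rw [setLIntegral_const] at h4
  have hv : volume (Icc (1:ℝ) (1 + t₀)) = ENNReal.ofReal t₀ := by simp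
  rw [hv] at h4
  by_contra hcon
  rw [not_lt, top_le_iff] at hcon
  rw [hcon] at h4
  rw [ENNReal.mul_top (by simp), ENNReal.top_mul (by simpa using ht₀)] at h4
  exact lt_irrefl _ h4

theorem dist_integrable {n : ℕ} (hn : 1 ≤ n) (D : C2Domain n) (hD : D.StrictlyStarShapedAt 0)
    {β : ℝ} (hβ0 : 0 < β) (hβ : β < 1) (ρ : ℝ) :
    (∀ᵐ x ∂(volume.restrict (ball (0 : En n) ρ)), 0 < infDist x (frontier D.carrier)) ∧
    Integrable (fun x => infDist x (frontier D.carrier) ^ (-β))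
      (volume.restrict (ball (0 : En n) ρ)) := by
  have h := lint_dist hn D hD hβ0 hβ ρ
  have hc : Continuous fun x : En n => infDist x (frontier D.carrier) := continuous_infDist_pt _
  have hae : ∀ᵐ x ∂(volume.restrict (ball (0 : En n) ρ)),
      0 < infDist x (frontier D.carrier) := by
    have hm : Measurable fun x : En n =>
        (ENNReal.ofReal (infDist x (frontier D.carrier))) ^ (-β) :=
      (hc.measurable.ennreal_ofReal).pow_const _
    filter_upwards [ae_lt_top hm h.ne] with x hx
    by_contra hcon
    have : infDist x (frontier D.carrier) = 0 := le_antisymm (not_lt.1 hcon) infDist_nonneg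
    rw [this, ENNReal.ofReal_zero, ENNReal.zero_rpow_of_neg (by linarith)] at hx
    exact lt_irrefl _ hx
  refine ⟨hae, ?_, ?_⟩
  · exact (hc.measurable.pow_const _).aestronglyMeasurable
  · rw [hasFiniteIntegral_iff_ofReal (Eventually.of_forall fun r => by
      have := infDist_nonneg (x := r) (s := frontier D.carrier); positivity)]
    refine lt_of_le_of_lt (lintegral_mono_ae ?_) h
    filter_upwards [hae] with x hx
    rw [ENNReal.ofReal_rpow_of_pos hx]

theorem kernel_integrable {n : ℕ} (hn : 1 ≤ n) {s β : ℝ} (hs : 0 < s)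
    (hβ : 2 * s < 1 + β) :
    Integrable (fun y : En n => min (‖y‖ ^ (1 + β)) 1 / ‖y‖ ^ ((n:ℝ) + 2 * s)) := by
  have : Nonempty (Fin n) := ⟨⟨0, hn⟩⟩
  rw [integrable_fun_norm_addHaar (volume : Measure (En n))
    (f := fun r : ℝ => min (r ^ (1 + β)) 1 / r ^ ((n:ℝ) + 2 * s))]
  have hfr : Module.finrank ℝ (En n) = n := by simp
  rw [hfr, ← Ioc_union_Ioi_eq_Ioi zero_le_one]
  have hpow : ∀ r : ℝ, 0 < r → r ^ (n - 1) = r ^ ((n:ℝ) - 1) := by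
    intro r hr
    rw [← Real.rpow_natCast, Nat.cast_sub hn, Nat.cast_one]
  apply IntegrableOn.union
  · have h : IntegrableOn (fun r : ℝ => r ^ (β - 2 * s)) (Ioc 0 1) := by
      rw [integrableOn_Ioc_iff_integrableOn_Ioo]
      exact (intervalIntegral.integrableOn_Ioo_rpow_iff (by norm_num)).2 (by linarith)
    refine h.congr_fun (fun r hr => ?_) measurableSet_Ioc
    have h1 : r ^ (1 + β) ≤ 1 := Real.rpow_le_one hr.1.le hr.2 (by linarith)
    simp only [min_eq_left h1, smul_eq_mul]
    rw [hpow r hr.1, ← Real.rpow_sub hr.1, ← Real.rpow_add hr.1]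
    congr 1; ring
  · have h : IntegrableOn (fun r : ℝ => r ^ (-1 - 2 * s)) (Ioi 1) :=
      integrableOn_Ioi_rpow_of_lt (by linarith) one_pos
    refine h.congr_fun (fun r hr => ?_) measurableSet_Ioi
    have hr0 : 0 < r := lt_trans one_pos hr
    have h1 : 1 ≤ r ^ (1 + β) := Real.one_le_rpow (le_of_lt hr) (by linarith)
    simp only [min_eq_right h1, smul_eq_mul]
    rw [hpow r hr0, one_div, ← Real.rpow_neg hr0.le, ← Real.rpow_add hr0]
    congr 1; ring

theorem second_diff {n : ℕ} {u : En n → ℝ} {U : Set (En n)} (hU : IsOpen U)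
    (hu : ContDiffOn ℝ 2 u U) {x : En n} {r K : ℝ} (hr : closedBall x r ⊆ U)
    (hK : ∀ z ∈ closedBall x r, ‖hess n u z‖ ≤ K) {y : En n} (hy : ‖y‖ ≤ r) :
    |2 * u x - u (x + y) - u (x - y)| ≤ 2 * K * ‖y‖ ^ 2 := by
  have hd1 : ∀ z ∈ U, DifferentiableAt ℝ u z := fun z hz =>
    (hu.contDiffAt (hU.mem_nhds hz)).differentiableAt (by norm_num)
  have hd2 : ∀ z ∈ U, DifferentiableAt ℝ (fderiv ℝ u) z := fun z hz =>
    ((hu.contDiffAt (hU.mem_nhds hz)).fderiv_right (m := 1) (by norm_num)).differentiableAt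
      (by norm_num)
  have hL : ∀ a ∈ closedBall x r, ∀ b ∈ closedBall x r,
      ‖fderiv ℝ u b - fderiv ℝ u a‖ ≤ K * ‖b - a‖ := fun a ha b hb =>
    (convex_closedBall x r).norm_image_sub_le_of_norm_fderiv_le
      (fun z hz => hd2 z (hr hz)) hK ha hb
  have hK0 : 0 ≤ K := (norm_nonneg (hess n u x)).trans
    (hK x (mem_closedBall_self ((norm_nonneg y).trans hy)))
  have hmem : ∀ z ∈ closedBall (0 : En n) ‖y‖, x + z ∈ closedBall x r ∧
      x - z ∈ closedBall x r := by
    intro z hz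
    have hz' : ‖z‖ ≤ ‖y‖ := by simpa using hz
    constructor <;> simp <;> linarith
  have hder : ∀ z ∈ closedBall (0 : En n) ‖y‖, HasFDerivWithinAt
      (fun z => u (x + z) + u (x - z)) (fderiv ℝ u (x + z) - fderiv ℝ u (x - z))
      (closedBall (0 : En n) ‖y‖) z := by
    intro z hz
    have h1 := (hd1 _ (hr (hmem z hz).1)).hasFDerivAt
    have h2 := (hd1 _ (hr (hmem z hz).2)).hasFDerivAt
    have h1' : HasFDerivAt (fun z => u (x + z)) (fderiv ℝ u (x + z)) z := by
      have := h1.comp z ((hasFDerivAt_id z).const_add x)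
      refine this.congr_fderiv ?_
      ext v; simp
    have h2' : HasFDerivAt (fun z => u (x - z)) (-fderiv ℝ u (x - z)) z := by
      have := h2.comp z ((hasFDerivAt_id z).const_sub x)
      refine this.congr_fderiv ?_
      ext v; simp
    have := (h1'.add h2').hasFDerivWithinAt (s := closedBall (0 : En n) ‖y‖)
    rwa [← sub_eq_add_neg] at this
  have := (convex_closedBall (0 : En n) ‖y‖).norm_image_sub_le_of_norm_hasFDerivWithin_le
    hder (C := 2 * K * ‖y‖) (by
      intro z hz
      refine (hL _ (hmem z hz).2 _ (hmem z hz).1).trans ?_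
      have e : x + z - (x - z) = (2:ℝ) • z := by rw [two_smul]; abel
      have hz' : ‖z‖ ≤ ‖y‖ := by simpa using hz
      rw [e, norm_smul, Real.norm_eq_abs, abs_of_pos two_pos]
      nlinarith) (mem_closedBall_self (norm_nonneg y)) (y := y) (by simp)
  simp only [add_zero, sub_zero, Real.norm_eq_abs] at this
  rw [← abs_neg]
  convert this using 1
  · congr 1; ring
  · ring

theorem ball_dichotomy {n : ℕ} (Ω : Set (En n)) (x : En n) :
    ball x (infDist x (frontier Ω)) ⊆ Ω ∨ ball x (infDist x (frontier Ω)) ⊆ Ωᶜ := by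
  have hdis : Disjoint (ball x (infDist x (frontier Ω))) (frontier Ω) := disjoint_ball_infDist
  have hpre : IsPreconnected (ball x (infDist x (frontier Ω))) := (convex_ball _ _).isPreconnected
  have hsub : ball x (infDist x (frontier Ω)) ⊆ interior Ω ∪ interior Ωᶜ := by
    intro z hz
    have hz' := Set.disjoint_left.1 hdis hz
    rw [interior_compl]
    by_cases h : z ∈ closure Ω
    · left; by_contra h'; exact hz' ⟨h, h'⟩
    · right; exact h
  have := isPreconnected_iff_subset_of_disjoint.1 hpre _ _ isOpen_interior isOpen_interior hsub (by
    rw [(Disjoint.mono interior_subset interior_subset disjoint_compl_right).inter_eq,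
      inter_empty])
  exact this.imp (fun h => h.trans interior_subset) (fun h => h.trans interior_subset)

theorem S_bound {n : ℕ} (hn : 1 ≤ n) {s : ℝ} (D : C2Domain n)
    {u : En n → ℝ} (hu2 : ContDiffOn ℝ 2 u D.carrier)
    {L : ℝ≥0} (hL : LipschitzWith L u) (hzero : ∀ x ∉ D.carrier, u x = 0)
    (hstar : StarCond n s D.carrier u) {β : ℝ} (hβ0 : 0 < β) (hβ : β < 1) (ρ : ℝ) :
    ∃ C, ∀ x ∈ ball (0 : En n) ρ, 0 < infDist x (frontier D.carrier) → ∀ y,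
      |2 * u x - u (x + y) - u (x - y)| ≤
        C * infDist x (frontier D.carrier) ^ (-β) * min (‖y‖ ^ (1 + β)) 1 := by
  obtain ⟨A, hA, γ, hγ, hst⟩ := hstar
  obtain ⟨M, hM⟩ : ∃ M, ∀ x, |u x| ≤ M := by
    obtain ⟨M, hM⟩ := (D.bounded.closure.isCompact_closure).exists_bound_of_continuousOn
      hL.continuous.continuousOn
    refine ⟨max M 0, fun x => ?_⟩
    by_cases hx : x ∈ D.carrier
    · exact (hM x (subset_closure (subset_closure hx))).trans (le_max_left _ _)
    · rw [hzero x hx]; simp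
  have hM0 : 0 ≤ M := (abs_nonneg _).trans (hM 0)
  obtain ⟨p₀, hp₀⟩ := D.frontier_nonempty hn
  set B := max (ρ + ‖p₀‖) 1 with hB
  have hB1 : 1 ≤ B := le_max_right _ _
  have hdB : ∀ x ∈ ball (0 : En n) ρ, infDist x (frontier D.carrier) ≤ B := by
    intro x hx
    refine (infDist_le_dist_of_mem hp₀).trans ((dist_triangle x 0 p₀).trans ?_)
    refine le_trans ?_ (le_max_left _ _)
    have := (mem_ball.1 hx).le
    simp only [dist_zero_left]
    linarith
  refine ⟨4 * M * B ^ β + 4 * L + 4 * A * B ^ γ, fun x hx hd y => ?_⟩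
  have hdx := hdB x hx
  set d := infDist x (frontier D.carrier) with hddef
  have hdn : 0 < d ^ (-β) := Real.rpow_pos_of_pos hd _
  have hT1 : 0 ≤ 4 * M * B ^ β := by positivity
  have hT2 : 0 ≤ 4 * (L:ℝ) := by positivity
  have hT3 : 0 ≤ 4 * A * B ^ γ := by positivity
  rcases le_or_gt 1 ‖y‖ with hy | hy
  · have h1 : 1 ≤ ‖y‖ ^ (1 + β) := Real.one_le_rpow hy (by linarith)
    rw [min_eq_right h1, mul_one]
    have h2 : |2 * u x - u (x + y) - u (x - y)| ≤ 4 * M := by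
      have a1 := abs_le.1 (hM x)
      have a2 := abs_le.1 (hM (x + y))
      have a3 := abs_le.1 (hM (x - y))
      rw [abs_le]; constructor <;> linarith
    have h3 : 1 ≤ B ^ β * d ^ (-β) := by
      rw [Real.rpow_neg hd.le, ← div_eq_mul_inv, one_le_div (by positivity)]
      gcongr
    have h4 : 4 * M ≤ 4 * M * B ^ β * d ^ (-β) := by nlinarith
    nlinarith
  have h1 : ‖y‖ ^ (1 + β) ≤ 1 := Real.rpow_le_one (norm_nonneg _) hy.le (by linarith)
  rw [min_eq_left h1]
  have hyn : 0 ≤ ‖y‖ ^ (1 + β) := by positivity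
  set Y := d ^ (-β) * ‖y‖ ^ (1 + β) with hY
  have hY0 : 0 ≤ Y := by positivity
  suffices h : |2 * u x - u (x + y) - u (x - y)| ≤ 4 * L * Y ∨
      |2 * u x - u (x + y) - u (x - y)| ≤ 4 * A * B ^ γ * Y by
    rw [mul_assoc, ← hY]
    rcases h with h | h <;> nlinarith
  rcases le_or_gt (d / 2) ‖y‖ with hyd | hyd
  · left
    have hy0 : 0 < ‖y‖ := by linarith
    have h2 : |2 * u x - u (x + y) - u (x - y)| ≤ 2 * L * ‖y‖ := by
      have a1 := hL.dist_le_mul x (x + y)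
      have a2 := hL.dist_le_mul x (x - y)
      rw [Real.dist_eq] at a1 a2
      simp only [dist_self_add_right, dist_self_sub_right] at a1 a2
      have e : 2 * u x - u (x + y) - u (x - y) = (u x - u (x + y)) + (u x - u (x - y)) := by ring
      rw [e]
      refine (abs_add_le _ _).trans ?_
      linarith
    have h3 : 1 ≤ 2 * (d ^ (-β) * ‖y‖ ^ β) := by
      have : d ^ β ≤ (2 * ‖y‖) ^ β := by gcongr; linarith
      rw [Real.mul_rpow two_pos.le hy0.le] at this
      have h2b : (2:ℝ) ^ β ≤ 2 := by
        simpa using Real.rpow_le_rpow_of_exponent_le one_le_two hβ.le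
      have h5 : d ^ β ≤ 2 * ‖y‖ ^ β := this.trans (by gcongr)
      rw [Real.rpow_neg hd.le]
      have : 2 * ((d ^ β)⁻¹ * ‖y‖ ^ β) = (2 * ‖y‖ ^ β) / d ^ β := by field_simp
      rw [this, one_le_div (by positivity)]
      exact h5
    rw [hY, Real.rpow_add hy0, Real.rpow_one]
    have h4 : 0 ≤ 2 * L * ‖y‖ := by positivity
    calc _ ≤ 2 * L * ‖y‖ * 1 := by linarith
      _ ≤ 2 * L * ‖y‖ * (2 * (d ^ (-β) * ‖y‖ ^ β)) := by gcongr
      _ = _ := by ring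
  · right
    have hcb : closedBall x (d / 2) ⊆ ball x d := closedBall_subset_ball (by linarith)
    rcases ball_dichotomy D.carrier x with hin | hout
    · rcases (norm_nonneg y).eq_or_lt with hy0 | hy0
      · rw [eq_comm, norm_eq_zero] at hy0
        have : 2 * u x - u (x + y) - u (x - y) = 0 := by rw [hy0]; simp; ring
        rw [this, abs_zero]; positivity
      have hK : ∀ z ∈ closedBall x (d / 2), ‖hess n u z‖ ≤ A * (d / 2) ^ (γ - 1) := by
        intro z hz
        refine (hst z (hin (hcb hz))).1.trans ?_
        have hz2 : d / 2 ≤ infDist z (frontier D.carrier) := by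
          have := infDist_le_infDist_add_dist (s := frontier D.carrier) (x := x) (y := z)
          have hz' := mem_closedBall.1 hz
          rw [dist_comm] at hz'
          linarith
        have := Real.rpow_le_rpow_of_nonpos (by positivity) hz2 (by linarith [hγ.2] : γ - 1 ≤ 0)
        gcongr
      have h2 := second_diff D.isOpen_carrier hu2 (hcb.trans hin) hK hyd.le
      refine h2.trans ?_
      have e1 : ‖y‖ ^ 2 = ‖y‖ ^ (1 + β) * ‖y‖ ^ (1 - β) := by
        rw [← Real.rpow_add hy0, ← Real.rpow_natCast]; congr 1; push_cast; ring
      have e2 : ‖y‖ ^ (1 - β) ≤ d ^ (1 - β) := by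
        have : 0 ≤ 1 - β := by linarith
        gcongr; linarith
      have e3 : (d / 2) ^ (γ - 1) ≤ 2 * d ^ (γ - 1) := by
        rw [Real.div_rpow hd.le two_pos.le, div_eq_mul_inv, ← Real.rpow_neg two_pos.le, mul_comm]
        gcongr
        have := Real.rpow_le_rpow_of_exponent_le one_le_two (by linarith [hγ.1] : -(γ - 1) ≤ 1)
        simpa using this
      have e4 : d ^ (γ - 1) * d ^ (1 - β) = d ^ γ * d ^ (-β) := by
        rw [← Real.rpow_add hd, ← Real.rpow_add hd]; congr 1; ring
      have e5 : d ^ γ ≤ B ^ γ := Real.rpow_le_rpow hd.le hdx hγ.1.le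
      calc 2 * (A * (d / 2) ^ (γ - 1)) * ‖y‖ ^ 2
          ≤ 2 * (A * (2 * d ^ (γ - 1))) * (‖y‖ ^ (1 + β) * d ^ (1 - β)) := by
            rw [e1]; gcongr
        _ = 4 * A * (d ^ (γ - 1) * d ^ (1 - β)) * ‖y‖ ^ (1 + β) := by ring
        _ = 4 * A * d ^ γ * Y := by rw [e4, hY]; ring
        _ ≤ _ := by gcongr
    · have hz : ∀ z, ‖z‖ < d → u (x + z) = 0 := fun z hz => hzero _ (hout (by simpa using hz))
      have a1 := hz 0 (by simpa using hd)
      have a2 := hz y (by linarith)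
      have a3 := hz (-y) (by rw [norm_neg]; linarith)
      rw [add_zero] at a1
      rw [← sub_eq_add_neg] at a3
      rw [a1, a2, a3]; simp; positivity

/-- The kernel integrand of the fractional Laplacian. -/
def kerS (n : ℕ) (s : ℝ) (u : En n → ℝ) (x y : En n) : ℝ :=
  (2 * u x - u (x + y) - u (x - y)) / ‖y‖ ^ ((n : ℝ) + 2 * s)

/-- The (unnormalized) bilinear form. -/
def formQ (n : ℕ) (s : ℝ) (v w : En n → ℝ) : ℝ :=
  ∫ y : En n, (∫ x : En n, (v (x + y) - v x) * (w (x + y) - w x)) / ‖y‖ ^ ((n : ℝ) + 2 * s)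

theorem formQ_comm (n : ℕ) (s : ℝ) (v w : En n → ℝ) : formQ n s v w = formQ n s w v := by
  simp only [formQ, mul_comm]

theorem formQ_scale {n : ℕ} (s : ℝ) (u : En n → ℝ) {l : ℝ} (hl : 0 < l) :
    formQ n s (fun x => u (l • x)) u
      = l ^ (2 * s - n) * formQ n s (fun x => u (l⁻¹ • x)) u := by
  set h : En n → ℝ := fun y => ∫ x, (u (l⁻¹ • (x + y)) - u (l⁻¹ • x)) * (u (x + y) - u x) with hh
  have hfr : Module.finrank ℝ (En n) = n := by simp
  have h1 : ∀ y : En n, ∫ x, (u (l • (x + y)) - u (l • x)) * (u (x + y) - u x)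
      = (l ^ n)⁻¹ * h (l • y) := by
    intro y
    have := Measure.integral_comp_smul (volume : Measure (En n))
      (fun x => (u (l⁻¹ • (x + l • y)) - u (l⁻¹ • x)) * (u (x + l • y) - u x)) l
    rw [hfr, abs_of_nonneg (by positivity), smul_eq_mul] at this
    simp only [hh]
    rw [← this]
    congr 1; ext x
    simp only [smul_add, smul_smul, inv_mul_cancel₀ hl.ne', one_smul]
    ring
  have h2 : ∀ y : En n, (l ^ n)⁻¹ * h (l • y) / ‖y‖ ^ ((n : ℝ) + 2 * s)
      = (l ^ n)⁻¹ * l ^ ((n : ℝ) + 2 * s) * (h (l • y) / ‖l • y‖ ^ ((n : ℝ) + 2 * s)) := by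
    intro y
    rw [norm_smul, Real.norm_eq_abs, abs_of_pos hl, Real.mul_rpow hl.le (norm_nonneg _)]
    have : l ^ ((n : ℝ) + 2 * s) ≠ 0 := (Real.rpow_pos_of_pos hl _).ne'
    rw [mul_div_assoc, mul_assoc, ← mul_div_assoc (l ^ ((n : ℝ) + 2 * s)),
      mul_div_mul_left _ _ this]
  have h3 := Measure.integral_comp_smul (volume : Measure (En n))
      (fun y => h y / ‖y‖ ^ ((n : ℝ) + 2 * s)) l
  rw [hfr, abs_of_nonneg (by positivity), smul_eq_mul] at h3
  simp only [formQ]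
  simp_rw [h1, h2]
  rw [integral_const_mul, h3, ← mul_assoc]
  congr 1
  rw [← Real.rpow_natCast, ← Real.rpow_neg hl.le, ← Real.rpow_add hl, ← Real.rpow_add hl]
  congr 1; ring

theorem kerS_integrable {n : ℕ} (hn : 1 ≤ n) {s : ℝ} (hs : s ∈ Set.Ioo (0:ℝ) 1)
    (D : C2Domain n) (hD : D.StrictlyStarShapedAt 0)
    {u : En n → ℝ} (hu2 : ContDiffOn ℝ 2 u D.carrier)
    {L : ℝ≥0} (hL : LipschitzWith L u) (hzero : ∀ x ∉ D.carrier, u x = 0)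
    (hstar : StarCond n s D.carrier u) (ρ : ℝ) :
    Integrable (fun p : En n × En n => kerS n s u p.1 p.2)
      ((volume.restrict (ball (0 : En n) ρ)).prod volume) := by
  obtain ⟨hpos, hint⟩ := dist_integrable hn D hD hs.1 hs.2 ρ
  obtain ⟨C, hC⟩ := S_bound hn D hu2 hL hzero hstar hs.1 hs.2 ρ
  have hk := kernel_integrable hn (s := s) (β := s) hs.1 (by linarith [hs.2])
  have hprod := (hint.const_mul C).mul_prod hk
  have huc := hL.continuous
  refine hprod.mono' ?_ ?_
  · apply Measurable.aestronglyMeasurable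
    unfold kerS
    have h1 : Measurable fun p : En n × En n => 2 * u p.1 - u (p.1 + p.2) - u (p.1 - p.2) :=
      Continuous.measurable (by fun_prop)
    exact h1.div (measurable_snd.norm.pow_const _)
  · have h1 : ∀ᵐ x ∂(volume.restrict (ball (0 : En n) ρ)), x ∈ ball (0 : En n) ρ ∧
        0 < infDist x (frontier D.carrier) := (ae_restrict_mem measurableSet_ball).and hpos
    filter_upwards [Measure.quasiMeasurePreserving_fst.ae h1] with p hp
    have := hC p.1 hp.1 hp.2 p.2
    rw [kerS, Real.norm_eq_abs, abs_div,
      abs_of_nonneg (Real.rpow_nonneg (norm_nonneg p.2) ((n:ℝ) + 2 * s)), ← mul_div_assoc]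
    gcongr

theorem energy_inner {n : ℕ} {u v : En n → ℝ} (hu : Continuous u) (hv : Continuous v)
    (hvc : HasCompactSupport v) (huc : HasCompactSupport u) (y : En n) :
    ∫ x, v x * (2 * u x - u (x + y) - u (x - y))
      = ∫ x, (v (x + y) - v x) * (u (x + y) - u x) := by
  have i1 : Integrable (fun x => v x * (u x - u (x + y))) :=
    Continuous.integrable_of_hasCompactSupport (by fun_prop) hvc.mul_right
  have i2 : Integrable (fun x => v x * (u x - u (x - y))) :=
    Continuous.integrable_of_hasCompactSupport (by fun_prop) hvc.mul_right
  have i3 : Integrable (fun x => v (x + y) * (u (x + y) - u x)) := by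
    have := i2.comp_add_right y
    simpa using this
  have e2 : ∫ x, v x * (u x - u (x - y)) = ∫ x, v (x + y) * (u (x + y) - u x) := by
    rw [← integral_add_right_eq_self (fun x => v x * (u x - u (x - y))) y]
    simp
  have a1 : ∫ x, v x * (2 * u x - u (x + y) - u (x - y))
      = (∫ x, v x * (u x - u (x + y))) + ∫ x, v x * (u x - u (x - y)) := by
    rw [← integral_add i1 i2]; congr 1; ext x; ring
  rw [a1, e2, ← integral_add i1 i3]
  congr 1; ext x; ring

theorem energy_identity {n : ℕ} {s : ℝ} {u v : En n → ℝ} (hu : Continuous u) (hv : Continuous v)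
    (huc : HasCompactSupport u) {ρ : ℝ} (hvρ : ∀ x ∉ ball (0 : En n) ρ, v x = 0)
    (hK : Integrable (fun p : En n × En n => kerS n s u p.1 p.2)
      ((volume.restrict (ball (0 : En n) ρ)).prod volume)) :
    (∫ x, v x * ∫ y, kerS n s u x y) = formQ n s v u ∧
    Integrable (fun y : En n => (∫ x : En n, (v (x + y) - v x) * (u (x + y) - u x))
      / ‖y‖ ^ ((n : ℝ) + 2 * s)) := by
  have hvc : HasCompactSupport v := by
    apply HasCompactSupport.intro (isCompact_closedBall (0 : En n) ρ)
    intro x hx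
    exact hvρ x (fun h => hx (ball_subset_closedBall h))
  obtain ⟨M, hM⟩ := hvc.exists_bound_of_continuous hv
  have hvK : Integrable (fun p : En n × En n => v p.1 * kerS n s u p.1 p.2)
      ((volume.restrict (ball (0 : En n) ρ)).prod volume) := by
    refine hK.bdd_mul (c := M) ?_ ?_
    · exact Continuous.aestronglyMeasurable (by fun_prop)
    · exact Eventually.of_forall fun p => hM p.1
  have hin : ∀ y, ∫ x in ball (0 : En n) ρ, v x * kerS n s u x y
      = (∫ x : En n, (v (x + y) - v x) * (u (x + y) - u x)) / ‖y‖ ^ ((n : ℝ) + 2 * s) := by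
    intro y
    rw [setIntegral_eq_integral_of_forall_compl_eq_zero (fun x hx => by rw [hvρ x hx, zero_mul]),
      ← energy_inner hu hv hvc huc, ← integral_div]
    congr 1; ext x; rw [kerS]; ring
  constructor
  · rw [← setIntegral_eq_integral_of_forall_compl_eq_zero (s := ball (0 : En n) ρ)
      (fun x hx => by rw [hvρ x hx, zero_mul])]
    simp_rw [← integral_const_mul]
    rw [integral_integral_swap hvK, formQ]
    congr 1; ext y; exact hin y
  · have := hvK.integral_prod_right
    simp only [hin] at this
    exact this

theorem seminorm_eq {n : ℕ} {s : ℝ} {u : En n → ℝ} (hu : Continuous u)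
    (huc : HasCompactSupport u)
    (hI : Integrable (fun y : En n => (∫ x : En n, (u (x + y) - u x) * (u (x + y) - u x))
      / ‖y‖ ^ ((n : ℝ) + 2 * s))) :
    seminormSsq n s u = cK n s / 2 * formQ n s u u := by
  rw [seminormSsq, formQ]
  congr 1
  have hmp := measurePreserving_prod_add (volume : Measure (En n)) (volume : Measure (En n))
  have hemb : MeasurableEmbedding (fun z : En n × En n => (z.1, z.1 + z.2)) :=
    (MeasurableEquiv.shearAddRight (En n)).measurableEmbedding
  have e1 := hmp.integral_comp hemb
    (fun p : En n × En n => (u p.1 - u p.2) ^ 2 / ‖p.1 - p.2‖ ^ ((n : ℝ) + 2 * s))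
  rw [Measure.volume_eq_prod, ← e1]
  simp only [sub_add_cancel_left, norm_neg]
  have hq : ∀ p : En n × En n, (u p.1 - u (p.1 + p.2)) ^ 2 / ‖p.2‖ ^ ((n : ℝ) + 2 * s)
      = (u (p.1 + p.2) - u p.1) * (u (p.1 + p.2) - u p.1) / ‖p.2‖ ^ ((n : ℝ) + 2 * s) := by
    intro p; congr 1; ring
  simp_rw [hq]
  rw [integral_prod_symm]
  · congr 1; ext y
    rw [← integral_div]
  · rw [integrable_prod_iff']
    · constructor
      · refine Eventually.of_forall fun y => ?_
        refine Integrable.div_const (f := fun x => (u (x + y) - u x) * (u (x + y) - u x)) ?_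
          (‖y‖ ^ ((n : ℝ) + 2 * s))
        have hsh : HasCompactSupport fun x => u (x + y) :=
          huc.comp_homeomorph (Homeomorph.addRight y)
        exact Continuous.integrable_of_hasCompactSupport (by fun_prop)
          (HasCompactSupport.mul_right (hsh.sub huc))
      · refine hI.congr (Eventually.of_forall fun y => ?_)
        simp only
        rw [← integral_div]
        congr 1; ext x
        rw [Real.norm_eq_abs, abs_of_nonneg]
        exact div_nonneg (mul_self_nonneg _) (by positivity)
    · apply Measurable.aestronglyMeasurable
      have h1 : Measurable fun p : En n × En n =>
          (u (p.1 + p.2) - u p.1) * (u (p.1 + p.2) - u p.1) :=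
        Continuous.measurable (by fun_prop)
      exact h1.div (measurable_snd.norm.pow_const _)

/-- identity (2.6) of Theorem 2.4: in a bounded C² domain strictly
star-shaped with respect to the origin, under condition (★),
`∫_Ω (x·∇u)(-Δ)ˢu dx = ((2s-n)/2)∫_Ω u(-Δ)ˢu dx = ((2s-n)/2)[u]_s²`. -/
theorem pohozaev_nonlocal_part (n : ℕ) (hn : 1 ≤ n) (s : ℝ) (hs : s ∈ Set.Ioo (0:ℝ) 1)
    (D : C2Domain n) (hD : D.StrictlyStarShapedAt 0)
    (u : En n → ℝ)
    (hu2 : ContDiffOn ℝ 2 u D.carrier)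
    (hu1 : ContDiffOn ℝ 1 u (closure D.carrier))
    (hlip : ∃ L : ℝ≥0, LipschitzWith L u)
    (hzero : ∀ x ∉ D.carrier, u x = 0)
    (hstar : StarCond n s D.carrier u) :
    (∫ x in D.carrier, ⟪x, gradient u x⟫ * fracLap n s u x)
      = (2 * s - n) / 2 * ∫ x in D.carrier, u x * fracLap n s u x ∧
    (2 * s - n) / 2 * (∫ x in D.carrier, u x * fracLap n s u x)
      = (2 * s - n) / 2 * seminormSsq n s u := by
  obtain ⟨L, hL⟩ := hlip
  have hu := hL.continuous
  obtain ⟨R, hR0, hR⟩ := D.bounded.subset_ball_lt 0 0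
  have huc : HasCompactSupport u := by
    apply HasCompactSupport.intro (isCompact_closedBall (0 : En n) R)
    intro x hx
    exact hzero x (fun h => hx (ball_subset_closedBall (hR h)))
  have hK := kerS_integrable hn hs D hD hu2 hL hzero hstar (2 * R)
  set F : En n → ℝ := fun x => ∫ y, kerS n s u x y with hF
  have hFL : ∀ x, fracLap n s u x = cK n s / 2 * F x := fun x => rfl
  have hFint : Integrable F (volume.restrict (ball (0 : En n) (2 * R))) := hK.integral_prod_left
  -- vanishing of dilations outside the ball
  have hvan : ∀ l : ℝ, 1 / 2 < l → ∀ x ∉ ball (0 : En n) (2 * R), u (l • x) = 0 := by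
    intro l hl x hx
    apply hzero
    intro h
    have := hR h
    simp only [mem_ball, dist_zero_right, norm_smul, Real.norm_eq_abs,
      abs_of_pos (by linarith : (0:ℝ) < l), not_lt] at this hx
    nlinarith
  have hE : ∀ l : ℝ, 1 / 2 < l → (∫ x, u (l • x) * F x) = formQ n s (fun x => u (l • x)) u :=
    fun l hl => (energy_identity hu (by fun_prop) huc (hvan l hl) hK).1
  have hE1 := energy_identity hu hu huc (ρ := 2 * R)
    (fun x hx => by simpa using hvan 1 (by norm_num) x hx) hK
  have hQ : (∫ x in D.carrier, u x * F x) = formQ n s u u := by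
    rw [← hE1.1]
    exact setIntegral_eq_integral_of_forall_compl_eq_zero
      (fun x hx => by rw [hzero x hx, zero_mul])
  -- the frontier is negligible
  have hae : ∀ᵐ x ∂(volume.restrict (ball (0 : En n) (2 * R))), x ∉ frontier D.carrier := by
    filter_upwards [(dist_integrable hn D hD hs.1 hs.2 (2 * R)).1] with x hx hx'
    rw [infDist_zero_of_mem hx'] at hx
    exact lt_irrefl _ hx
  have hdiff : ∀ x ∉ frontier D.carrier, DifferentiableAt ℝ u x ∧
      (x ∉ D.carrier → fderiv ℝ u x = 0) := by
    intro x hx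
    by_cases hxc : x ∈ D.carrier
    · exact ⟨(hu2.contDiffAt (D.isOpen_carrier.mem_nhds hxc)).differentiableAt (by norm_num),
        fun h => absurd hxc h⟩
    · have hxcl : x ∉ closure D.carrier := fun h =>
        hx ⟨h, fun h' => hxc (interior_subset h')⟩
      have heq : u =ᶠ[nhds x] fun _ => (0:ℝ) := by
        filter_upwards [isClosed_closure.isOpen_compl.mem_nhds hxcl] with z hz
        exact hzero z (fun h => hz (subset_closure h))
      refine ⟨(differentiableAt_const (0:ℝ)).congr_of_eventuallyEq heq, fun _ => ?_⟩
      rw [heq.fderiv_eq]; simp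
  have hmeas : Measurable fun x => fderiv ℝ u x x :=
    (by fun_prop : Continuous fun p : (En n →L[ℝ] ℝ) × En n => p.1 p.2).measurable.comp
      ((measurable_fderiv ℝ u).prodMk measurable_id)
  have hder := hasDerivAt_integral_of_dominated_loc_of_lip
    (μ := volume.restrict (ball (0 : En n) (2 * R)))
    (F := fun (l : ℝ) x => u (l • x) * F x) (x₀ := (1:ℝ)) (s := univ)
    (F' := fun x => fderiv ℝ u x x * F x)
    (bound := fun x => L * ‖x‖ * |F x|) univ_mem
    (Eventually.of_forall fun l => by
      refine AEStronglyMeasurable.mul ?_ hFint.aestronglyMeasurable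
      exact Continuous.aestronglyMeasurable (by fun_prop))
    (by
      obtain ⟨M, hM⟩ := huc.exists_bound_of_continuous hu
      refine hFint.bdd_mul (c := M) (Continuous.aestronglyMeasurable (by fun_prop)) ?_
      exact Eventually.of_forall fun x => hM _)
    (hmeas.aestronglyMeasurable.mul hFint.aestronglyMeasurable)
    (Eventually.of_forall fun x => by
      apply LipschitzOnWith.of_dist_le_mul
      intro a _ b _
      have h1 := hL.dist_le_mul (a • x) (b • x)
      rw [dist_eq_norm (a • x), ← sub_smul, norm_smul] at h1
      rw [Real.dist_eq] at h1 ⊢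
      rw [← sub_mul, abs_mul, Real.coe_nnabs,
        abs_of_nonneg (by positivity : 0 ≤ L * ‖x‖ * |F x|), Real.dist_eq]
      rw [Real.norm_eq_abs] at h1
      calc _ ≤ (L * (|a - b| * ‖x‖)) * |F x| := by gcongr
        _ = _ := by ring)
    (by
      refine hFint.abs.bdd_mul (c := L * (2 * R))
        (Continuous.aestronglyMeasurable (by fun_prop)) ?_
      filter_upwards [ae_restrict_mem measurableSet_ball] with x hx
      rw [Real.norm_eq_abs, abs_of_nonneg (by positivity)]
      have : ‖x‖ < 2 * R := by simpa using hx
      gcongr)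
    (by
      filter_upwards [hae] with x hx
      have h1 : HasDerivAt (fun l : ℝ => l • x) x 1 := by
        simpa using (hasDerivAt_id (1:ℝ)).smul_const x
      have h2 : HasFDerivAt u (fderiv ℝ u x) ((1:ℝ) • x) := by
        rw [one_smul]; exact (hdiff x hx).1.hasFDerivAt
      exact (h2.comp_hasDerivAt 1 h1).mul_const _)
  have hder' := hder.2
  set P := ∫ x in ball (0 : En n) (2 * R), fderiv ℝ u x x * F x with hP
  set I : ℝ → ℝ := fun l => ∫ x in ball (0 : En n) (2 * R), u (l • x) * F x with hI
  have hIQ : ∀ l : ℝ, 1 / 2 < l → I l = formQ n s (fun x => u (l • x)) u := by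
    intro l hl
    rw [← hE l hl]
    exact setIntegral_eq_integral_of_forall_compl_eq_zero
      (fun x hx => by rw [hvan l hl x hx, zero_mul])
  have hI1 : I 1 = formQ n s u u := by
    rw [hIQ 1 (by norm_num)]; simp
  -- functional equation
  have hfe : I =ᶠ[nhds 1] fun l => l ^ (2 * s - n) * I l⁻¹ := by
    filter_upwards [Ioo_mem_nhds (by norm_num : (1/2:ℝ) < 1) (by norm_num : (1:ℝ) < 2)] with l hl
    have hl0 : 0 < l := by linarith [hl.1]
    have hli : 1 / 2 < l⁻¹ := by
      rw [one_div]; exact inv_strictAnti₀ hl0 hl.2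
    rw [hIQ l hl.1, hIQ _ hli, formQ_scale s u hl0]
  have hinv : HasDerivAt (fun l : ℝ => I l⁻¹) (P * (-1)) 1 := by
    have h1 : HasDerivAt (fun l : ℝ => l⁻¹) (-1) 1 := by
      simpa using hasDerivAt_inv (one_ne_zero (α := ℝ))
    have h2 : HasDerivAt I P ((1:ℝ)⁻¹) := by rw [inv_one]; exact hder'
    exact h2.comp 1 h1
  have hpow : HasDerivAt (fun l : ℝ => l ^ (2 * s - n)) (2 * s - n) 1 := by
    simpa using Real.hasDerivAt_rpow_const (x := 1) (p := 2 * s - n) (Or.inl one_ne_zero)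
  have huniq := hder'.unique ((hpow.mul hinv).congr_of_eventuallyEq hfe)
  simp only [inv_one, Real.one_rpow, hI1] at huniq
  have hP2 : P = (2 * s - n) / 2 * formQ n s u u := by linarith
  have hcar : MeasurableSet D.carrier := D.isOpen_carrier.measurableSet
  have hPO : (∫ x in D.carrier, ⟪x, gradient u x⟫ * F x) = P := by
    have e1 : ∀ x, ⟪x, gradient u x⟫ = fderiv ℝ u x x := fun x => by
      rw [real_inner_comm, inner_gradient_left]
    simp_rw [e1]
    rw [hP]
    symm
    apply setIntegral_eq_of_subset_of_ae_sdiff_eq_zero measurableSet_ball.nullMeasurableSet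
      (hR.trans (ball_subset_ball (by linarith)))
    filter_upwards [ae_imp_of_ae_restrict hae] with x hx hx'
    rw [(hdiff x (hx hx'.1)).2 hx'.2]; simp
  have hA : (∫ x in D.carrier, ⟪x, gradient u x⟫ * fracLap n s u x) = cK n s / 2 * P := by
    rw [← hPO, ← integral_const_mul]
    congr 1; ext x; rw [hFL]; ring
  have hB : (∫ x in D.carrier, u x * fracLap n s u x) = cK n s / 2 * formQ n s u u := by
    rw [← hQ, ← integral_const_mul]
    congr 1; ext x; rw [hFL]; ring
  constructor
  · rw [hA, hB, hP2]; ring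
  · rw [hB, seminorm_eq hu huc hE1.2]
end
end
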